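/- arXiv:1301.4206 — 4 statements merged into one kernel-verified Lean document; each statement's English description precedes it below -/
import Mathlib

section
/- Let G be a finite undirected multigraph and A an Abelian group. The Abelian group H(E,A) of all balanced functions from E to A is isomorphic to A^{con₃(G)−con(G)} × A₂^{|V|−con₃(G)}, where con₃(G) is the number of 3-edge-connected equivalence classes of vertices, con(G) is the number of connected components, and A₂ is the subgroup of elements a∈A with 2a=0. -/
open Finset

/-- A finite undirected multigraph: each edge `e : E` has an unordered pair of
endpoints `ends e : Sym2 V`.  Loops and parallel edges are allowed and the graph
need not be connected. -/
structure Multigraph (V E : Type*) where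
  ends : E → Sym2 V

namespace Multigraph

variable {V E : Type*}

/-- `G.IsChain x y p` : `p` is an alternating sequence `v₁,e₁,…,vₙ,eₙ` (encoded as a
list of vertex-edge pairs) which forms a walk from `x` to `y` (the final vertex `y`
is omitted, i.e. this is "truncated"). -/
def IsChain (G : Multigraph V E) : V → V → List (V × E) → Prop
  | x, y, [] => x = y
  | x, y, (v, e) :: rest => v = x ∧ ∃ w, G.ends e = s(x, w) ∧ G.IsChain w y rest

/-- A truncated trail (ttrail) from `x` to `y`: an alternating walk with no repeated
edges, final vertex omitted. -/
def IsTtrail (G : Multigraph V E) (x y : V) (p : List (V × E)) : Prop :=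
  G.IsChain x y p ∧ (p.map Prod.snd).Nodup

/-- A cycle: a closed ttrail with no repeated vertices. -/
def IsCycle (G : Multigraph V E) (x : V) (p : List (V × E)) : Prop :=
  G.IsTtrail x x p ∧ (p.map Prod.fst).Nodup

/-- Two ttrails are edge-disjoint if they have no common edges. -/
def EdgeDisjoint (p q : List (V × E)) : Prop :=
  ∀ e, e ∈ p.map Prod.snd → e ∉ q.map Prod.snd

/-- `k`-edge-connectivity: two distinct vertices are `k`-edge-connected if there are
`k` pairwise edge-disjoint ttrails between them; every vertex is `k`-edge-connected
to itself. -/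
def KConn (G : Multigraph V E) (k : ℕ) (v w : V) : Prop :=
  v = w ∨ ∃ p : Fin k → List (V × E),
    (∀ i, G.IsTtrail v w (p i)) ∧ ∀ i j, i ≠ j → EdgeDisjoint (p i) (p j)

/-- `conk G k` : the number of equivalence classes of `k`-edge-connected vertices. -/
noncomputable def conk (G : Multigraph V E) (k : ℕ) : ℕ :=
  Nat.card (Quotient (Relation.EqvGen.setoid (G.KConn k)))

/-- The number of connected components of `G`. -/
noncomputable def con (G : Multigraph V E) : ℕ := G.conk 1

section Homology

variable [Fintype V] [Fintype E] [DecidableEq V] [DecidableEq E]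

/-- The vector in `F₂^V` which is the sum of the two endpoints of the edge `e`
(so a loop is sent to `0`). -/
def edgeVec (G : Multigraph V E) (e : E) : V → ZMod 2 := fun v =>
  Sym2.lift ⟨fun a b => (if v = a then (1 : ZMod 2) else 0) + (if v = b then 1 else 0),
    fun _ _ => add_comm _ _⟩ (G.ends e)

/-- The boundary map `δ : F₂^E → F₂^V`, sending each edge to the sum of its two
adjacent vertices. -/
def boundary (G : Multigraph V E) : (E → ZMod 2) →ₗ[ZMod 2] (V → ZMod 2) where
  toFun c := fun v => ∑ e, c e * G.edgeVec e v
  map_add' c d := by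
    funext v
    simp [add_mul, Finset.sum_add_distrib]
  map_smul' r c := by
    funext v
    simp [Finset.mul_sum, mul_assoc]

/-- The Cycle Space of `G` : the kernel of the boundary map. -/
def cycleSpace (G : Multigraph V E) : Submodule (ZMod 2) (E → ZMod 2) :=
  LinearMap.ker G.boundary

/-- The indicator vector of a vertex in `F₂^V`. -/
def vert (v : V) : V → ZMod 2 := fun w => if w = v then 1 else 0

/-- A `k`-weak homological cycle: a homological path between two `k`-edge-connected
vertices. -/
def IsWeakCycle (G : Multigraph V E) (k : ℕ) (c : E → ZMod 2) : Prop :=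
  ∃ v w, G.KConn k v w ∧ G.boundary c = vert v + vert w

/-- The `k`-Weak Cycle Space: the span of all `k`-weak homological cycles. -/
def weakCycleSpace (G : Multigraph V E) (k : ℕ) : Submodule (ZMod 2) (E → ZMod 2) :=
  Submodule.span (ZMod 2) {c | G.IsWeakCycle k c}

/-- `eps p` : the set of edges of the ttrail `p`, as a vector in `F₂^E`. -/
def eps (p : List (V × E)) : E → ZMod 2 := fun e => if e ∈ p.map Prod.snd then 1 else 0

/-- The `F₂`-linear extension of `f : E → A` to subsets of `E`: the sum of `f` over
the edges of the subset `S`. -/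
def fSum {A : Type*} [AddCommGroup A] (f : E → A) (S : E → ZMod 2) : A :=
  ∑ e ∈ Finset.univ.filter fun e => S e = 1, f e

end Homology

section Balanced

variable {A : Type*} [AddCommGroup A]

/-- The sum `g(v₁)+f(e₁)+…+g(vₙ)+f(eₙ)` of the values of a vertex-function `g` and an
edge-function `f` along a ttrail `v₁,e₁,…,vₙ,eₙ`. -/
def pathSum (g : V → A) (f : E → A) (p : List (V × E)) : A :=
  (p.map fun ve => g ve.1 + f ve.2).sum

/-- The sum `h(v₁)+h(e₁)+…+h(vₙ)+h(eₙ)` of the values of `h : V ∪ E → A` along a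
ttrail `v₁,e₁,…,vₙ,eₙ`. -/
def wSum (h : V ⊕ E → A) (p : List (V × E)) : A :=
  (p.map fun ve => h (Sum.inl ve.1) + h (Sum.inr ve.2)).sum

lemma pathSum_cons (g : V → A) (f : E → A) (a : V × E) (t : List (V × E)) :
    pathSum g f (a :: t) = (g a.1 + f a.2) + pathSum g f t := by
  simp [pathSum]

lemma pathSum_zero (p : List (V × E)) : pathSum (0 : V → A) (0 : E → A) p = 0 := by
  induction p with
  | nil => simp [pathSum]
  | cons a t ih => simp [pathSum_cons, ih]

lemma pathSum_add (g g' : V → A) (f f' : E → A) (p : List (V × E)) :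
    pathSum (g + g') (f + f') p = pathSum g f p + pathSum g' f' p := by
  induction p with
  | nil => simp [pathSum]
  | cons a t ih => simp only [pathSum_cons, Pi.add_apply, ih]; abel

lemma pathSum_neg (g : V → A) (f : E → A) (p : List (V × E)) :
    pathSum (-g) (-f) p = -pathSum g f p := by
  induction p with
  | nil => simp [pathSum]
  | cons a t ih => simp only [pathSum_cons, Pi.neg_apply, ih]; abel

lemma wSum_cons (h : V ⊕ E → A) (a : V × E) (t : List (V × E)) :
    wSum h (a :: t) = (h (Sum.inl a.1) + h (Sum.inr a.2)) + wSum h t := by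
  simp [wSum]

lemma wSum_zero (p : List (V × E)) : wSum (0 : V ⊕ E → A) p = 0 := by
  induction p with
  | nil => simp [wSum]
  | cons a t ih => simp [wSum_cons, ih]

lemma wSum_add (h h' : V ⊕ E → A) (p : List (V × E)) :
    wSum (h + h') p = wSum h p + wSum h' p := by
  induction p with
  | nil => simp [wSum]
  | cons a t ih => simp only [wSum_cons, Pi.add_apply, ih]; abel

lemma wSum_neg (h : V ⊕ E → A) (p : List (V × E)) :
    wSum (-h) p = -wSum h p := by
  induction p with
  | nil => simp [wSum]
  | cons a t ih => simp only [wSum_cons, Pi.neg_apply, ih]; abel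

/-- A function `f : E → A` is balanced if the sum of its values along every closed
ttrail of `G` is zero. -/
def BalancedE (G : Multigraph V E) (f : E → A) : Prop :=
  ∀ x p, G.IsTtrail x x p → pathSum (0 : V → A) f p = 0

/-- A function `g : V → A` is balanceable if some `f : E → A` balances it, i.e. the
sum of the values of `g` and `f` along every closed ttrail of `G` is zero. -/
def Balanceable (G : Multigraph V E) (g : V → A) : Prop :=
  ∃ f : E → A, ∀ x p, G.IsTtrail x x p → pathSum g f p = 0

/-- A function `h : V ∪ E → A` is balanced if the sum of its values along every
closed ttrail of `G` is zero. -/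
def BalancedW (G : Multigraph V E) (h : V ⊕ E → A) : Prop :=
  ∀ x p, G.IsTtrail x x p → wSum h p = 0

/-- `H(E,A)` : the group of balanced functions from `E` to `A`. -/
def Hgroup (G : Multigraph V E) (A : Type*) [AddCommGroup A] : AddSubgroup (E → A) where
  carrier := {f | G.BalancedE f}
  zero_mem' := fun _ p _ => pathSum_zero p
  add_mem' := by
    intro f f' hf hf' x p hp
    have h := pathSum_add (0 : V → A) 0 f f' p
    rw [add_zero] at h
    rw [h, hf x p hp, hf' x p hp, add_zero]
  neg_mem' := by
    intro f hf x p hp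
    have h := pathSum_neg (0 : V → A) f p
    rw [neg_zero] at h
    rw [h, hf x p hp, neg_zero]

/-- `B(V,A)` : the group of balanceable functions from `V` to `A`. -/
def Bgroup (G : Multigraph V E) (A : Type*) [AddCommGroup A] : AddSubgroup (V → A) where
  carrier := {g | G.Balanceable g}
  zero_mem' := ⟨0, fun _ p _ => pathSum_zero p⟩
  add_mem' := by
    rintro g g' ⟨f, hf⟩ ⟨f', hf'⟩
    exact ⟨f + f', fun x p hp => by rw [pathSum_add, hf x p hp, hf' x p hp, add_zero]⟩
  neg_mem' := by
    rintro g ⟨f, hf⟩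
    exact ⟨-f, fun x p hp => by rw [pathSum_neg, hf x p hp, neg_zero]⟩

/-- `W(V ∪ E, A)` : the group of balanced functions from `V ∪ E` to `A`. -/
def Wgroup (G : Multigraph V E) (A : Type*) [AddCommGroup A] : AddSubgroup (V ⊕ E → A) where
  carrier := {h | G.BalancedW h}
  zero_mem' := fun _ p _ => wSum_zero p
  add_mem' := by
    intro h h' hh hh' x p hp
    rw [wSum_add, hh x p hp, hh' x p hp, add_zero]
  neg_mem' := by
    intro h hh x p hp
    rw [wSum_neg, hh x p hp, neg_zero]

end Balanced

/-- A `3`-weakly closed ttrail (a ttrail between `3`-edge-connected vertices) which is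
short: no inner vertex is `3`-edge-connected to the initial vertex. -/
def ShortW (G : Multigraph V E) (x y : V) (p : List (V × E)) : Prop :=
  G.IsTtrail x y p ∧ G.KConn 3 x y ∧ ∀ v ∈ (p.map Prod.fst).tail, ¬ G.KConn 3 v x

/-- `G.ShortChain x y L` : `L` is a list of nontrivial short `3`-weakly closed ttrails
which concatenate into a ttrail from `x` to `y`. -/
def ShortChain (G : Multigraph V E) : V → V → List (List (V × E)) → Prop
  | x, y, [] => x = y
  | x, y, s :: rest => s ≠ [] ∧ ∃ z, G.ShortW x z s ∧ G.ShortChain z y rest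

/-- `A₂` : the subgroup of elements of order dividing `2` in `A`. -/
def torsion2 (A : Type*) [AddCommGroup A] : AddSubgroup A where
  carrier := {a | 2 • a = 0}
  zero_mem' := by simp
  add_mem' := by
    intro a b ha hb
    simp only [Set.mem_setOf_eq] at *
    rw [smul_add, ha, hb, add_zero]
  neg_mem' := by
    intro a ha
    simp only [Set.mem_setOf_eq] at *
    rw [smul_neg, ha, neg_zero]

/-- `2A` : the image of the doubling map `a ↦ 2a`. -/
def double2 (A : Type*) [AddCommGroup A] : AddSubgroup A where
  carrier := {b | ∃ a, b = 2 • a}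
  zero_mem' := ⟨0, by simp⟩
  add_mem' := by
    rintro a b ⟨x, rfl⟩ ⟨y, rfl⟩
    exact ⟨x + y, by rw [smul_add]⟩
  neg_mem' := by
    rintro a ⟨x, rfl⟩
    exact ⟨-x, by rw [smul_neg]⟩

end Multigraph

namespace Multigraph

section Paths

variable {V E : Type*}

lemma exists_ends (G : Multigraph V E) (e : E) : ∃ ab : V × V, G.ends e = s(ab.1, ab.2) := by
  induction h : G.ends e with
  | _ a b => exact ⟨(a, b), rfl⟩

/-- endpoints of an edge, chosen -/
noncomputable def hd (G : Multigraph V E) (e : E) (b : Bool) : V :=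
  if b then (G.exists_ends e).choose.1 else (G.exists_ends e).choose.2

lemma ends_hd (G : Multigraph V E) (e : E) (b : Bool) :
    G.ends e = s(G.hd e b, G.hd e (!b)) := by
  have h := (G.exists_ends e).choose_spec
  cases b
  · simp only [hd]; simp; rw [Sym2.eq_swap]; exact h
  · simp only [hd]; simp; exact h

/-- chains with allowed darts -/
def DChain (G : Multigraph V E) (al : E → Bool → Prop) : V → V → List (V × E) → Prop
  | x, y, [] => x = y
  | x, y, (v, e) :: r => v = x ∧ ∃ b, al e b ∧ G.hd e b = x ∧ G.DChain al (G.hd e (!b)) y r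

/-- one step -/
def DStep (G : Multigraph V E) (al : E → Bool → Prop) (u w : V) : Prop :=
  ∃ e b, al e b ∧ G.hd e b = u ∧ G.hd e (!b) = w

lemma DChain.isChain {G : Multigraph V E} {al : E → Bool → Prop} {x y : V} {p : List (V × E)}
    (h : G.DChain al x y p) : G.IsChain x y p := by
  induction p generalizing x with
  | nil => exact h
  | cons a r ih =>
    obtain ⟨v, e⟩ := a
    obtain ⟨rfl, b, hb, hx, hr⟩ := h
    exact ⟨rfl, G.hd e (!b), by rw [← hx]; exact G.ends_hd e b, ih hr⟩

lemma DChain.mem_ends {G : Multigraph V E} {al : E → Bool → Prop} {x y : V} {p : List (V × E)}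
    (h : G.DChain al x y p) {e : E} (he : e ∈ p.map Prod.snd) {u : V} (hu : u ∈ G.ends e) :
    u ∈ p.map Prod.fst ∨ u = y := by
  induction p generalizing x with
  | nil => simp at he
  | cons a r ih =>
    obtain ⟨v, e'⟩ := a
    obtain ⟨rfl, b, hb, hx, hr⟩ := h
    simp only [List.map_cons, List.mem_cons] at he ⊢
    rcases he with rfl | he
    · rw [G.ends_hd e b, Sym2.mem_iff] at hu
      rcases hu with rfl | rfl
      · left; left; exact hx
      · cases r with
        | nil => right; exact hr
        | cons c r =>
          obtain ⟨v', e'⟩ := c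
          left; right
          simp [hr.1]
    · rcases ih hr he with h | h
      · left; right; exact h
      · right; exact h

lemma DChain.suffix {G : Multigraph V E} {al : E → Bool → Prop} {x y : V} {p : List (V × E)}
    (h : G.DChain al x y p) {u : V} (hu : u ∈ p.map Prod.fst) (hn : (p.map Prod.fst).Nodup)
    (hy : y ∉ p.map Prod.fst) :
    ∃ q, G.DChain al u y q ∧ (q.map Prod.fst).Nodup ∧ y ∉ q.map Prod.fst := by
  induction p generalizing x with
  | nil => simp at hu
  | cons a r ih =>
    obtain ⟨v, e'⟩ := a
    by_cases huv : u = v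
    · subst huv
      have : u = x := h.1
      subst this
      exact ⟨_, h, hn, hy⟩
    · obtain ⟨rfl, b, hb, hx, hr⟩ := h
      simp only [List.map_cons, List.mem_cons, List.nodup_cons, not_or] at hu hn hy
      exact ih hr (hu.resolve_left huv) hn.2 hy.2

lemma exists_dchain {G : Multigraph V E} {al : E → Bool → Prop} {x y : V}
    (h : Relation.ReflTransGen (G.DStep al) x y) :
    ∃ q, G.DChain al x y q ∧ (q.map Prod.fst).Nodup ∧ y ∉ q.map Prod.fst := by
  induction h using Relation.ReflTransGen.head_induction_on with
  | refl => exact ⟨[], rfl, by simp, by simp⟩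
  | head hxw _ ih =>
    rename_i a c
    obtain ⟨q, hq, hn, hy⟩ := ih
    obtain ⟨e, b, hal, rfl, rfl⟩ := hxw
    by_cases h1 : G.hd e b ∈ q.map Prod.fst
    · exact hq.suffix h1 hn hy
    by_cases h2 : G.hd e b = y
    · exact ⟨[], h2, by simp, by simp⟩
    refine ⟨(G.hd e b, e) :: q, ⟨rfl, b, hal, rfl, hq⟩, ?_, ?_⟩
    · simp only [List.map_cons, List.nodup_cons]; exact ⟨h1, hn⟩
    · simp only [List.map_cons, List.mem_cons, not_or]; exact ⟨fun h => h2 h.symm, hy⟩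

lemma DChain.nodup_edges {G : Multigraph V E} {al : E → Bool → Prop} {x y : V}
    {p : List (V × E)} (h : G.DChain al x y p) (hn : (p.map Prod.fst).Nodup)
    (hy : y ∉ p.map Prod.fst) : (p.map Prod.snd).Nodup := by
  induction p generalizing x with
  | nil => simp
  | cons a r ih =>
    obtain ⟨v, e⟩ := a
    obtain ⟨rfl, b, hb, hx, hr⟩ := h
    simp only [List.map_cons, List.mem_cons, List.nodup_cons, not_or] at hn hy ⊢
    refine ⟨fun he => ?_, ih hr hn.2 hy.2⟩
    rcases hr.mem_ends he (u := v) (by rw [G.ends_hd e b, ← hx]; simp) with h | h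
    · exact hn.1 h
    · exact hy.1 h.symm

/-- divergence -/
noncomputable def dv [Fintype E] [DecidableEq V] (G : Multigraph V E) (φ : E → ℤ) (v : V) : ℤ :=
  ∑ e, φ e * ((if G.hd e true = v then 1 else 0) - (if G.hd e false = v then 1 else 0))

lemma DChain.exists_flow [Fintype E] [DecidableEq V] [DecidableEq E]
    {G : Multigraph V E} {al : E → Bool → Prop} {x y : V}
    {p : List (V × E)} (h : G.DChain al x y p) (hn : (p.map Prod.snd).Nodup) :
    ∃ π : E → ℤ, (∀ e, e ∉ p.map Prod.snd → π e = 0) ∧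
      (∀ e ∈ p.map Prod.snd, (π e = 1 ∧ al e true) ∨ (π e = -1 ∧ al e false)) ∧
      ∀ v, G.dv π v = (if x = v then 1 else 0) - (if y = v then 1 else 0) := by
  induction p generalizing x with
  | nil =>
    refine ⟨0, by simp, by simp, fun v => ?_⟩
    have : x = y := h
    simp [dv, this]
  | cons a r ih =>
    obtain ⟨v, e⟩ := a
    obtain ⟨rfl, b, hb, hx, hr⟩ := h
    simp only [List.map_cons, List.nodup_cons] at hn
    obtain ⟨π, h1, h2, h3⟩ := ih hr hn.2
    refine ⟨fun e' => (if e' = e then (if b then 1 else -1) else 0) + π e', ?_, ?_, ?_⟩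
    · intro e' he'
      simp only [List.map_cons, List.mem_cons, not_or] at he'
      simp [he'.1, h1 e' he'.2]
    · intro e' he'
      simp only [List.map_cons, List.mem_cons] at he'
      by_cases hee : e' = e
      · subst hee
        have := h1 e' hn.1
        cases b <;> simp [hb, this]
      · simpa [hee] using h2 e' (he'.resolve_left hee)
    · intro v'
      have : ∀ π' : E → ℤ, G.dv (fun e' => π' e' + π e') v' = G.dv π' v' + G.dv π v' := by
        intro π'; simp [dv, add_mul, Finset.sum_add_distrib]
      rw [this, h3]
      subst hx
      cases b <;> simp [dv, ite_mul] 

lemma path_lemma [Fintype E] [DecidableEq V] [DecidableEq E]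
    {G : Multigraph V E} {al : E → Bool → Prop} {x y : V}
    (h : Relation.ReflTransGen (G.DStep al) x y) :
    ∃ p, ∃ π : E → ℤ, G.IsTtrail x y p ∧ (∀ e, e ∉ p.map Prod.snd → π e = 0) ∧
      (∀ e ∈ p.map Prod.snd, (π e = 1 ∧ al e true) ∨ (π e = -1 ∧ al e false)) ∧
      ∀ v, G.dv π v = (if x = v then 1 else 0) - (if y = v then 1 else 0) := by
  obtain ⟨p, hp, hn, hy⟩ := exists_dchain h
  have hn' := hp.nodup_edges hn hy
  obtain ⟨π, h⟩ := hp.exists_flow hn'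
  exact ⟨p, π, ⟨hp.isChain, hn'⟩, h⟩

lemma sum_dv [Fintype V] [Fintype E] [DecidableEq V] (G : Multigraph V E) (φ : E → ℤ)
    (S : V → Prop) [DecidablePred S] :
    ∑ v, (if S v then G.dv φ v else 0) =
      ∑ e, φ e * ((if S (G.hd e true) then 1 else 0) - (if S (G.hd e false) then 1 else 0)) := by
  have : ∀ v, (if S v then G.dv φ v else 0) = ∑ e, φ e * ((if G.hd e true = v then
      (if S v then 1 else 0) else 0) - (if G.hd e false = v then (if S v then 1 else 0) else 0)) := by
    intro v
    by_cases h : S v <;> simp [h, dv]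
  simp_rw [this]
  rw [Finset.sum_comm]
  refine Finset.sum_congr rfl fun e _ => ?_
  rw [← Finset.mul_sum, Finset.sum_sub_distrib]
  simp

lemma reach_closed {G : Multigraph V E} {al : E → Bool → Prop} {x : V} (e : E) (b : Bool)
    (hal : al e b) (h : Relation.ReflTransGen (G.DStep al) x (G.hd e b)) :
    Relation.ReflTransGen (G.DStep al) x (G.hd e (!b)) :=
  h.tail ⟨e, b, hal, rfl, rfl⟩

open Classical in
lemma sum_dv_st [Fintype V] [Fintype E] (G : Multigraph V E) (φ : E → ℤ)
    (S : V → Prop) {x y : V} {k : ℕ} (hx : S x) (hy : ¬ S y)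
    (h : ∀ v, G.dv φ v = k * ((if x = v then 1 else 0) - (if y = v then 1 else 0))) :
    (k : ℤ) = ∑ e, φ e * ((if S (G.hd e true) then 1 else 0) - (if S (G.hd e false) then 1 else 0)) := by
  rw [← sum_dv]
  have : ∀ v, (if S v then G.dv φ v else 0) = if x = v then (k : ℤ) else 0 := by
    intro v
    rw [h]
    by_cases h1 : x = v
    · subst h1
      have : y ≠ x := by rintro rfl; exact hy hx
      simp [hx, this]
    · by_cases h2 : y = v
      · subst h2; simp [hy, h1]
      · simp [h1, h2]
  simp [this]

open Classical in
lemma flow_decomp [Fintype V] [Fintype E] (G : Multigraph V E) (x y : V) (hxy : x ≠ y) (k : ℕ) :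
    ∀ φ : E → ℤ, (∀ e, φ e = 0 ∨ φ e = 1 ∨ φ e = -1) →
    (∀ v, G.dv φ v = k * ((if x = v then 1 else 0) - (if y = v then 1 else 0))) →
    ∃ p : Fin k → List (V × E), (∀ i, G.IsTtrail x y (p i)) ∧
      (∀ i j, i ≠ j → EdgeDisjoint (p i) (p j)) ∧ ∀ i, ∀ e ∈ (p i).map Prod.snd, φ e ≠ 0 := by
  induction k with
  | zero => intro φ _ _; exact ⟨fun i => i.elim0, fun i => i.elim0, fun i => i.elim0, fun i => i.elim0⟩
  | succ k ih =>
    intro φ h1 h2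
    by_cases hr : Relation.ReflTransGen
      (G.DStep (fun e b => if b then φ e = 1 else φ e = -1)) x y
    · obtain ⟨p, π, hp, hp0, hp1, hd⟩ := path_lemma hr
      have hon : ∀ e ∈ p.map Prod.snd, φ e - π e = 0 ∧ φ e ≠ 0 := by
        intro e he
        rcases hp1 e he with h | h <;> simp at h <;> rw [h.1, h.2] <;> simp
      obtain ⟨q, hq1, hq2, hq3⟩ := ih (fun e => φ e - π e) (by
        intro e
        by_cases he : e ∈ p.map Prod.snd
        · left; exact (hon e he).1
        · simpa only [hp0 e he, sub_zero] using h1 e) (by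
        intro v
        have : G.dv (fun e => φ e - π e) v = G.dv φ v - G.dv π v := by
          simp [dv, sub_mul, Finset.sum_sub_distrib]
        rw [this, h2, hd]; push_cast; ring)
      refine ⟨Fin.cons p q, ?_, ?_, ?_⟩
      · intro i; refine Fin.cases ?_ ?_ i
        · exact hp
        · exact hq1
      · intro i j
        refine Fin.cases ?_ (fun i => ?_) i <;> refine Fin.cases ?_ (fun j => ?_) j
        · simp
        · intro _ e he he'
          exact hq3 j e (by simpa using he') (hon e (by simpa using he)).1
        · intro _ e he he'
          exact hq3 i e (by simpa using he) (hon e (by simpa using he')).1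
        · intro hij
          simpa using hq2 i j (fun h => hij (by rw [h]))
      · intro i; refine Fin.cases ?_ (fun i => ?_) i
        · intro e he; exact (hon e (by simpa using he)).2
        · intro e he h0
          have h3 : e ∈ (q i).map Prod.snd := by simpa using he
          have h4 := hq3 i e h3
          by_cases he : e ∈ p.map Prod.snd
          · exact h4 (hon e he).1
          · exact h4 (by simp only [hp0 e he, h0, sub_zero])
    · exfalso
      have hs := G.sum_dv_st φ _ (Relation.ReflTransGen.refl) hr h2
      have : (∑ e, φ e * ((if Relation.ReflTransGen
        (G.DStep (fun e b => if b then φ e = 1 else φ e = -1)) x (G.hd e true) then 1 else 0) -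
        (if Relation.ReflTransGen
        (G.DStep (fun e b => if b then φ e = 1 else φ e = -1)) x (G.hd e false) then 1 else 0))) ≤ 0 := by
        refine Finset.sum_nonpos fun e _ => ?_
        have a1 := reach_closed (G := G) (al := fun e b => if b then φ e = 1 else φ e = -1) (x := x) e true
        have a2 := reach_closed (G := G) (al := fun e b => if b then φ e = 1 else φ e = -1) (x := x) e false
        simp only [Bool.not_true, Bool.not_false] at a1 a2
        rcases h1 e with h | h | h <;> simp [h] at a1 a2 ⊢
        · split_ifs <;> simp_all
        · split_ifs <;> simp_all
      push_cast at hs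
      linarith

open Classical in
lemma menger [Fintype V] [Fintype E] (G : Multigraph V E) (x y : V) (k : ℕ)
    (hcut : ∀ S : V → Prop, S x → ¬ S y →
      k ≤ (Finset.univ.filter fun e => ¬ (S (G.hd e true) ↔ S (G.hd e false))).card) :
    ∃ p : Fin k → List (V × E), (∀ i, G.IsTtrail x y (p i)) ∧
      (∀ i j, i ≠ j → EdgeDisjoint (p i) (p j)) := by
  by_cases hxy : x = y
  · subst hxy
    exact ⟨fun _ => [], fun _ => ⟨rfl, by simp⟩, fun _ _ _ e he => by simp at he⟩
  suffices h : ∃ φ : E → ℤ, (∀ e, φ e = 0 ∨ φ e = 1 ∨ φ e = -1) ∧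
    (∀ v, G.dv φ v = k * ((if x = v then 1 else 0) - (if y = v then 1 else 0))) by
    obtain ⟨φ, h1, h2⟩ := h
    obtain ⟨p, h1, h2, _⟩ := G.flow_decomp x y hxy k φ h1 h2
    exact ⟨p, h1, h2⟩
  induction k with
  | zero => exact ⟨0, by simp, by simp [dv]⟩
  | succ k ih =>
    obtain ⟨φ, h1, h2⟩ := ih (fun S hx hy => (Nat.le_succ k).trans (hcut S hx hy))
    by_cases hr : Relation.ReflTransGen
      (G.DStep (fun e b => if b then φ e ≠ 1 else φ e ≠ -1)) x y
    · obtain ⟨p, π, hp, hp0, hp1, hd⟩ := path_lemma hr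
      refine ⟨fun e => φ e + π e, fun e => ?_, fun v => ?_⟩
      · by_cases he : e ∈ p.map Prod.snd
        · rcases hp1 e he with h | h <;> simp at h <;> rcases h1 e with h' | h' | h' <;>
            simp [h'] at h ⊢ <;> simp [h]
        · simpa only [hp0 e he, add_zero] using h1 e
      · have : G.dv (fun e => φ e + π e) v = G.dv φ v + G.dv π v := by
          simp [dv, add_mul, Finset.sum_add_distrib]
        rw [this, h2, hd]; push_cast; ring
    · exfalso
      have hs := G.sum_dv_st φ _ (Relation.ReflTransGen.refl) hr h2
      have hc := hcut _ (Relation.ReflTransGen.refl) hr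
      rw [Finset.card_filter] at hc
      zify at hc
      rw [Finset.sum_congr rfl (g := fun e => φ e * ((if Relation.ReflTransGen
        (G.DStep (fun e b => if b then φ e ≠ 1 else φ e ≠ -1)) x (G.hd e true) then 1 else 0) -
        (if Relation.ReflTransGen
        (G.DStep (fun e b => if b then φ e ≠ 1 else φ e ≠ -1)) x (G.hd e false) then 1 else 0))),
        ← hs] at hc
      · linarith
      intro e _
      have a1 := reach_closed (G := G) (al := fun e b => if b then φ e ≠ 1 else φ e ≠ -1) (x := x) e true
      have a2 := reach_closed (G := G) (al := fun e b => if b then φ e ≠ 1 else φ e ≠ -1) (x := x) e false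
      simp only [Bool.not_true, Bool.not_false] at a1 a2
      rcases h1 e with h | h | h <;> simp [h] at a1 a2 ⊢
      · simp [iff_def]; exact ⟨a1, a2⟩
      · split_ifs <;> simp_all
      · split_ifs <;> simp_all

end Paths

end Multigraph

namespace Multigraph

section Alg

lemma zmod2_cases (a : ZMod 2) : a = 0 ∨ a = 1 := by revert a; decide

lemma zmod2_ne_zero {a : ZMod 2} : a ≠ 0 ↔ a = 1 := by revert a; decide

open Classical in
lemma ind_mem {X : Type*} [Fintype X] (U : Submodule (ZMod 2) (X → ZMod 2))
    (hmul : ∀ a ∈ U, ∀ b ∈ U, a * b ∈ U) (x : X) (c₀ : X → ZMod 2) (h0 : c₀ ∈ U) (h1 : c₀ x = 1) :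
    (fun y => if (∀ c ∈ U, c x = c y) then (1 : ZMod 2) else 0) ∈ U := by
  have key : ∀ y, ∃ c ∈ U, c x = 1 ∧ (¬ (∀ c ∈ U, c x = c y) → c y = 0) := by
    intro y
    by_cases hy : ∀ c ∈ U, c x = c y
    · exact ⟨c₀, h0, h1, fun h => absurd hy h⟩
    · push Not at hy
      obtain ⟨c, hc, hne⟩ := hy
      rcases zmod2_cases (c x) with hx | hx
      · refine ⟨c₀ + c₀ * c, U.add_mem h0 (hmul _ h0 _ hc), by simp [h1, hx], fun _ => ?_⟩
        have : c y = 1 := by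
          rw [hx] at hne; exact zmod2_ne_zero.1 hne.symm
        simp only [Pi.add_apply, Pi.mul_apply, this, mul_one]
        exact CharTwo.add_self_eq_zero _
      · refine ⟨c, hc, hx, fun _ => ?_⟩
        rcases zmod2_cases (c y) with h | h
        · exact h
        · exact absurd (hx.trans h.symm) hne
  choose g hgU hgx hgy using key
  have hp : (∏ y, g y) ∈ U :=
    Finset.prod_induction_nonempty g (· ∈ U) (fun a b ha hb => hmul a ha b hb) ⟨x, Finset.mem_univ x⟩
      (fun y _ => hgU y)
  convert hp using 1
  funext z
  rw [Finset.prod_apply]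
  split_ifs with h
  · symm
    refine Finset.prod_eq_one fun y _ => ?_
    rw [← h _ (hgU y)]; exact hgx y
  · symm
    exact Finset.prod_eq_zero (Finset.mem_univ z) (hgy z h)

lemma pi_add_self {X : Type*} (a : X → ZMod 2) : a + a = 0 := by
  funext x; exact CharTwo.add_self_eq_zero _

end Alg

section Hom

variable {V E : Type*} [Fintype V] [Fintype E] [DecidableEq V] [DecidableEq E]

lemma edgeVec_of_ends (G : Multigraph V E) {e : E} {a b : V} (h : G.ends e = s(a, b)) (v : V) :
    G.edgeVec e v = (if v = a then (1 : ZMod 2) else 0) + (if v = b then 1 else 0) := by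
  simp [edgeVec, h]

/-- the cut map -/
noncomputable def cutMap (G : Multigraph V E) : (V → ZMod 2) →ₗ[ZMod 2] (E → ZMod 2) where
  toFun h := fun e => h (G.hd e true) + h (G.hd e false)
  map_add' a b := by funext e; simp; ring
  map_smul' r a := by funext e; simp; ring

lemma cutMap_apply (G : Multigraph V E) (h : V → ZMod 2) (e : E) :
  G.cutMap h e = h (G.hd e true) + h (G.hd e false) := rfl

lemma sum_edgeVec (G : Multigraph V E) {M : Type*} [AddCommGroup M] [Module (ZMod 2) M]
    (g : V → M) {e : E} {a b : V} (h : G.ends e = s(a, b)) :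
    ∑ v, G.edgeVec e v • g v = g a + g b := by
  simp_rw [G.edgeVec_of_ends h, add_smul, ite_smul, one_smul, zero_smul]
  rw [Finset.sum_add_distrib]; simp

lemma cutMap_of_ends (G : Multigraph V E) (g : V → ZMod 2) {e : E} {a b : V}
    (h : G.ends e = s(a, b)) : G.cutMap g e = g a + g b := by
  rw [← G.sum_edgeVec g h, G.sum_edgeVec g (G.ends_hd e true)]; rfl

lemma adj (G : Multigraph V E) {M : Type*} [AddCommGroup M] [Module (ZMod 2) M]
    (c : E → ZMod 2) (g : V → M) :
    ∑ e, c e • (g (G.hd e true) + g (G.hd e false)) = ∑ v, G.boundary c v • g v := by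
  have : ∀ e, g (G.hd e true) + g (G.hd e false) = ∑ v, G.edgeVec e v • g v := fun e =>
    (G.sum_edgeVec g (G.ends_hd e true)).symm
  simp_rw [this, Finset.smul_sum]
  rw [Finset.sum_comm]
  refine Finset.sum_congr rfl fun v _ => ?_
  simp only [boundary, LinearMap.coe_mk, AddHom.coe_mk, Finset.sum_smul, smul_smul]

/-- sum over a set -/
def hat {A : Type*} [AddCommGroup A] (f : E → A) (c : E → ZMod 2) : A := ∑ e, (c e).val • f e

variable {A : Type*} [AddCommGroup A]

lemma hat_add (f : E → A) (c c' : E → ZMod 2) :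
    hat f (c + c') + 2 • hat f (c * c') = hat f c + hat f c' := by
  simp only [hat, Finset.smul_sum, ← Finset.sum_add_distrib]
  refine Finset.sum_congr rfl fun e _ => ?_
  rw [smul_smul, ← add_smul, ← add_smul]
  congr 1
  simp only [Pi.add_apply, Pi.mul_apply]
  generalize c e = a
  generalize c' e = b
  revert a b; decide

lemma hat_fadd (f f' : E → A) (c : E → ZMod 2) : hat (f + f') c = hat f c + hat f' c := by
  simp [hat, Finset.sum_add_distrib]

lemma hat_fneg (f : E → A) (c : E → ZMod 2) : hat (-f) c = - hat f c := by
  simp [hat]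

lemma hat_zero (f : E → A) : hat f 0 = 0 := by simp [hat]

lemma eps_cons {a : V × E} {p : List (V × E)} (h : a.2 ∉ p.map Prod.snd) :
    eps (a :: p) = Pi.single a.2 1 + eps p := by
  funext e
  simp only [eps, List.map_cons, List.mem_cons, Pi.add_apply, Pi.single_apply]
  by_cases he : e = a.2
  · subst he; rw [if_pos (Or.inl rfl), if_pos rfl, if_neg h, add_zero]
  · simp only [he, false_or, if_false, zero_add]

lemma hat_eps (f : E → A) {p : List (V × E)} (h : (p.map Prod.snd).Nodup) :
    hat f (eps p) = pathSum (0 : V → A) f p := by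
  induction p with
  | nil => simp [pathSum, hat, eps]
  | cons a p ih =>
    simp only [List.map_cons, List.nodup_cons] at h
    rw [pathSum_cons, ← ih h.2, eps_cons h.1]
    have h2 := hat_add f (Pi.single a.2 1) (eps p)
    have h3 : (Pi.single a.2 1 : E → ZMod 2) * eps p = 0 := by
      funext e
      simp only [Pi.mul_apply, Pi.single_apply, eps]
      by_cases he : e = a.2
      · subst he; rw [if_neg h.1]; simp
      · simp [he]
    rw [h3, hat_zero, smul_zero, add_zero] at h2
    rw [h2]
    congr 1
    simp only [hat, Pi.single_apply]
    rw [Finset.sum_eq_single a.2]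
    · simp [ZMod.val_one]
    · intro b _ hb; simp [hb]
    · simp

lemma boundary_single (G : Multigraph V E) {e : E} {a b : V} (h : G.ends e = s(a, b)) :
    G.boundary (Pi.single e 1) = vert a + vert b := by
  funext v
  simp [boundary, Pi.single_apply, G.edgeVec_of_ends h, vert]

lemma boundary_eps (G : Multigraph V E) {x y : V} {p : List (V × E)} (h : G.IsTtrail x y p) :
    G.boundary (eps p) = vert x + vert y := by
  induction p generalizing x with
  | nil =>
    have : x = y := h.1
    subst this
    have : (eps ([] : List (V × E)) : E → ZMod 2) = 0 := by funext e; simp [eps]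
    rw [this, map_zero]; exact (pi_add_self (vert x)).symm
  | cons a p ih =>
    obtain ⟨v, e⟩ := a
    obtain ⟨⟨rfl, w, hw, hc⟩, hn⟩ := h
    simp only [List.map_cons, List.nodup_cons] at hn
    rw [eps_cons hn.1, map_add, G.boundary_single hw, ih ⟨hc, hn.2⟩]
    have := pi_add_self (vert w)
    calc vert v + vert w + (vert w + vert y) = vert v + (vert w + vert w) + vert y := by abel
      _ = _ := by rw [this, add_zero]

lemma hat_closed (G : Multigraph V E) {f : E → A} (hf : G.BalancedE f) {x : V} {p : List (V × E)}
    (h : G.IsTtrail x x p) : hat f (eps p) = 0 := by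
  rw [hat_eps f h.2]; exact hf x p h

lemma adj2 (G : Multigraph V E) (c : E → ZMod 2) (h : V → ZMod 2) :
    ∑ e, c e * G.cutMap h e = ∑ v, G.boundary c v * h v := G.adj c h

open Classical in
lemma euler (G : Multigraph V E) {f : E → A} (hf : G.BalancedE f) (c : E → ZMod 2)
    (hc : G.boundary c = 0) : hat f c = 0 := by
  induction hn : (Finset.univ.filter fun e => c e = 1).card using Nat.strong_induction_on
    generalizing c with
  | _ n ih =>
    by_cases h0 : c = 0
    · rw [h0, hat_zero]
    obtain ⟨e, he⟩ : ∃ e, c e = 1 := by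
      by_contra h; push Not at h
      exact h0 (funext fun e => (zmod2_cases (c e)).resolve_right (h e))
    by_cases hr : Relation.ReflTransGen (G.DStep (fun e' _ => e' ≠ e ∧ c e' = 1))
      (G.hd e false) (G.hd e true)
    · obtain ⟨p, π, hp, -, hp1, -⟩ := path_lemma hr
      have hp2 : ∀ e' ∈ p.map Prod.snd, e' ≠ e ∧ c e' = 1 := by
        intro e' he'
        rcases hp1 e' he' with h | h <;> exact h.2
      have hq : G.IsTtrail (G.hd e true) (G.hd e true) ((G.hd e true, e) :: p) := by
        refine ⟨⟨rfl, G.hd e false, G.ends_hd e true, hp.1⟩, ?_⟩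
        simp only [List.map_cons, List.nodup_cons]
        exact ⟨fun h => (hp2 e h).1 rfl, hp.2⟩
      set q := (G.hd e true, e) :: p with hqdef
      have hqc : ∀ e', eps q e' = 1 → c e' = 1 := by
        intro e' h
        simp only [eps, hqdef, List.map_cons, List.mem_cons] at h
        split_ifs at h with h1
        · rcases h1 with rfl | h1
          · exact he
          · exact (hp2 e' h1).2
        · simp at h
      have hmul : c * eps q = eps q := by
        funext e'
        rcases zmod2_cases (eps q e') with h | h
        · simp [h]
        · simp [h, hqc e' h]
      have hqe : eps q e = 1 := by simp [eps, hqdef]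
      have h2 := hat_add f c (eps q)
      rw [hmul, G.hat_closed hf hq, smul_zero, add_zero, add_zero] at h2
      rw [← h2]
      refine ih _ ?_ (c + eps q) ?_ rfl
      · rw [← hn]
        refine Finset.card_lt_card ?_
        rw [Finset.ssubset_iff_of_subset]
        · refine ⟨e, by simp [he], ?_⟩
          simp only [Finset.mem_filter, Pi.add_apply, he, hqe, not_and]
          intro _; decide
        · intro e' h
          simp only [Finset.mem_filter, Finset.mem_univ, true_and, Pi.add_apply] at h ⊢
          rcases zmod2_cases (eps q e') with h' | h'
          · rw [h', add_zero] at h; exact h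
          · exact hqc e' h'
      · rw [map_add, hc, G.boundary_eps hq, zero_add]
        exact pi_add_self _
    · exfalso
      have h1 := G.adj2 c (fun v => if Relation.ReflTransGen
        (G.DStep (fun e' _ => e' ≠ e ∧ c e' = 1)) (G.hd e false) v then 1 else 0)
      rw [hc] at h1
      rw [Finset.sum_eq_single e] at h1
      · rw [cutMap_apply, he, if_neg hr, if_pos Relation.ReflTransGen.refl] at h1
        simp at h1
      · intro e' _ hne
        rcases zmod2_cases (c e') with h | h
        · simp [h]
        rw [cutMap_apply]
        have a1 := reach_closed (G := G) (al := fun e' _ => e' ≠ e ∧ c e' = 1) (x := G.hd e false) e' true ⟨hne, h⟩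
        have a2 := reach_closed (G := G) (al := fun e' _ => e' ≠ e ∧ c e' = 1) (x := G.hd e false) e' false ⟨hne, h⟩
        simp only [Bool.not_true, Bool.not_false] at a1 a2
        rw [if_congr (Iff.intro a1 a2) rfl rfl, CharTwo.add_self_eq_zero, mul_zero]
      · simp

end Hom

end Multigraph

namespace Multigraph

section Cuts

variable {V E : Type*} [Fintype V] [Fintype E] [DecidableEq V] [DecidableEq E]

/-- small cuts -/
def Small (G : Multigraph V E) (h : V → ZMod 2) : Prop :=
  (Finset.univ.filter fun e => G.cutMap h e = 1).card ≤ 2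

/-- span of small cuts -/
def BB (G : Multigraph V E) : Submodule (ZMod 2) (V → ZMod 2) :=
  Submodule.span (ZMod 2) {h | G.Small h}

lemma small_of_ker (G : Multigraph V E) {h : V → ZMod 2} (hh : G.cutMap h = 0) : G.Small h := by
  simp [Small, hh]

lemma cutMap_one (G : Multigraph V E) : G.cutMap 1 = 0 := by
  funext e; rw [cutMap_apply]; exact CharTwo.add_self_eq_zero _

lemma one_mem_BB (G : Multigraph V E) : (1 : V → ZMod 2) ∈ G.BB :=
  Submodule.subset_span (G.small_of_ker G.cutMap_one)

lemma small_mem_BB (G : Multigraph V E) {h : V → ZMod 2} (hh : G.Small h) : h ∈ G.BB :=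
  Submodule.subset_span hh

lemma small_mul (G : Multigraph V E) {h k : V → ZMod 2} (hh : G.Small h) (hk : G.Small k) :
    h * k ∈ G.BB := by
  have mh : h ∈ G.BB := Submodule.subset_span hh
  have mk : k ∈ G.BB := Submodule.subset_span hk
  have m1 := G.one_mem_BB
  have hsum : (Finset.univ.filter fun e => G.cutMap (h * k) e = 1).card +
      (Finset.univ.filter fun e => G.cutMap (h * (1 + k)) e = 1).card +
      (Finset.univ.filter fun e => G.cutMap ((1 + h) * k) e = 1).card +
      (Finset.univ.filter fun e => G.cutMap ((1 + h) * (1 + k)) e = 1).card ≤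
      2 * (Finset.univ.filter fun e => G.cutMap h e = 1).card +
      2 * (Finset.univ.filter fun e => G.cutMap k e = 1).card := by
    simp only [Finset.card_filter, Finset.mul_sum, ← Finset.sum_add_distrib]
    refine Finset.sum_le_sum fun e _ => ?_
    simp only [cutMap_apply, Pi.mul_apply, Pi.add_apply, Pi.one_apply]
    rcases zmod2_cases (h (G.hd e true)) with h1 | h1 <;>
    rcases zmod2_cases (h (G.hd e false)) with h2 | h2 <;>
    rcases zmod2_cases (k (G.hd e true)) with h3 | h3 <;>
    rcases zmod2_cases (k (G.hd e false)) with h4 | h4 <;>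
    simp only [h1, h2, h3, h4] <;> decide
  unfold Small at hh hk
  have hor : G.Small (h * k) ∨ G.Small (h * (1 + k)) ∨ G.Small ((1 + h) * k) ∨
      G.Small ((1 + h) * (1 + k)) := by
    unfold Small; omega
  rcases hor with h' | h' | h' | h' <;> have m := G.small_mem_BB h'
  · exact m
  · convert G.BB.sub_mem m mh using 1; ring
  · convert G.BB.sub_mem m mk using 1; ring
  · convert G.BB.sub_mem (G.BB.sub_mem (G.BB.sub_mem m mk) mh) m1 using 1; ring

lemma BB_mul (G : Multigraph V E) : ∀ a ∈ G.BB, ∀ b ∈ G.BB, a * b ∈ G.BB := by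
  intro a ha b hb
  induction ha using Submodule.span_induction with
  | mem a ha =>
    induction hb using Submodule.span_induction with
    | mem b hb => exact G.small_mul ha hb
    | zero => rw [mul_zero]; exact G.BB.zero_mem
    | add x y _ _ hx hy => rw [mul_add]; exact G.BB.add_mem hx hy
    | smul r x _ hx => rw [mul_smul_comm]; exact G.BB.smul_mem r hx
  | zero => rw [zero_mul]; exact G.BB.zero_mem
  | add x y _ _ hx hy => rw [add_mul]; exact G.BB.add_mem hx hy
  | smul r x _ hx => rw [smul_mul_assoc]; exact G.BB.smul_mem r hx

/-- orthogonal of the small cuts -/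
def WW (G : Multigraph V E) : Submodule (ZMod 2) (E → ZMod 2) where
  carrier := {c | ∀ h, G.Small h → ∑ e, c e * G.cutMap h e = 0}
  zero_mem' := by intro h _; simp
  add_mem' := by
    intro a b ha hb h hh
    simp only [Pi.add_apply, add_mul, Finset.sum_add_distrib]
    rw [ha h hh, hb h hh, add_zero]
  smul_mem' := by
    intro r a ha h hh
    simp only [Pi.smul_apply, smul_eq_mul, mul_assoc, ← Finset.mul_sum]
    rw [ha h hh, mul_zero]

lemma mem_WW (G : Multigraph V E) {c : E → ZMod 2} :
    c ∈ G.WW ↔ ∀ h, G.Small h → ∑ e, c e * G.cutMap h e = 0 := Iff.rfl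

lemma sum_cut (G : Multigraph V E) (c : E → ZMod 2) (h : V → ZMod 2) :
    ∑ e, c e * G.cutMap h e = ∑ e ∈ Finset.univ.filter (fun e => G.cutMap h e = 1), c e := by
  rw [Finset.sum_filter]
  refine Finset.sum_congr rfl fun e _ => ?_
  rcases zmod2_cases (G.cutMap h e) with h | h <;> simp [h]

lemma WW_mul (G : Multigraph V E) : ∀ a ∈ G.WW, ∀ b ∈ G.WW, a * b ∈ G.WW := by
  intro a ha b hb h hh
  have h1 := ha h hh
  have h2 := hb h hh
  rw [sum_cut] at *
  unfold Small at hh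
  generalize (Finset.univ.filter (fun e => G.cutMap h e = 1)) = s at *
  rcases Nat.lt_or_ge s.card 2 with hc | hc
  · rcases (show s.card = 0 ∨ s.card = 1 by omega) with hc | hc
    · rw [Finset.card_eq_zero] at hc; simp [hc]
    · obtain ⟨e, rfl⟩ := Finset.card_eq_one.1 hc
      simp at h1 ⊢; simp [h1]
  · obtain ⟨e, e', hne, rfl⟩ := Finset.card_eq_two.1 (le_antisymm hh hc)
    rw [Finset.sum_pair hne] at *
    simp only [Pi.mul_apply]
    revert h1 h2
    generalize a e = p
    generalize a e' = q
    generalize b e = r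
    generalize b e' = t
    revert p q r t; decide

lemma WW_BB (G : Multigraph V E) {c : E → ZMod 2} (hc : c ∈ G.WW) {h : V → ZMod 2}
    (hh : h ∈ G.BB) : ∑ e, c e * G.cutMap h e = 0 := by
  induction hh using Submodule.span_induction with
  | mem a ha => exact hc a ha
  | zero => simp
  | add x y _ _ hx hy => simp only [map_add, Pi.add_apply, mul_add, Finset.sum_add_distrib, hx, hy, add_zero]
  | smul r x _ hx =>
    simp only [map_smul, Pi.smul_apply, smul_eq_mul, mul_left_comm _ r, ← Finset.mul_sum, hx, mul_zero]

lemma mem_WW_of_BB (G : Multigraph V E) {c : E → ZMod 2}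
    (hc : ∀ h ∈ G.BB, ∑ v, G.boundary c v * h v = 0) : c ∈ G.WW := by
  intro h hh
  rw [adj2]; exact hc h (Submodule.subset_span hh)

lemma mem_WW_of_boundary (G : Multigraph V E) {c : E → ZMod 2} (hc : G.boundary c = 0) :
    c ∈ G.WW := G.mem_WW_of_BB (by simp [hc])

/-- not separated by a small cut -/
def Sim (G : Multigraph V E) (x y : V) : Prop := ∀ h, G.Small h → h x = h y

lemma sim_iff_BB (G : Multigraph V E) {x y : V} : G.Sim x y ↔ ∀ h ∈ G.BB, h x = h y := by
  constructor
  · intro hs h hh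
    induction hh using Submodule.span_induction with
    | mem a ha => exact hs a ha
    | zero => rfl
    | add x y _ _ hx hy => simp [hx, hy]
    | smul r x _ hx => simp [hx]
  · intro hs h hh; exact hs h (Submodule.subset_span hh)

lemma sum_vert_mul (x y : V) (h : V → ZMod 2) :
    ∑ v, (vert x + vert y) v * h v = h x + h y := by
  simp [vert, add_mul, Finset.sum_add_distrib]

lemma trail_cross (G : Multigraph V E) {x y : V} {p : List (V × E)} (hp : G.IsTtrail x y p)
    {h : V → ZMod 2} (hne : h x ≠ h y) : ∃ e ∈ p.map Prod.snd, G.cutMap h e = 1 := by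
  by_contra hcon
  push Not at hcon
  have h1 := G.adj2 (eps p) h
  rw [G.boundary_eps hp, sum_vert_mul, Finset.sum_eq_zero] at h1
  · apply hne
    revert h1; generalize h x = a; generalize h y = b; revert a b; decide
  · intro e _
    by_cases he : e ∈ p.map Prod.snd
    · have := hcon e he
      rw [(zmod2_cases (G.cutMap h e)).resolve_right this, mul_zero]
    · simp only [eps, if_neg he, zero_mul]

lemma sim_of_kconn (G : Multigraph V E) {x y : V} (hk : G.KConn 3 x y) : G.Sim x y := by
  rcases hk with rfl | ⟨p, hp, hd⟩
  · intro _ _; rfl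
  intro h hh
  by_contra hne
  have := fun i => G.trail_cross (hp i) hne
  choose e he1 he2 using this
  have hinj : Function.Injective e := by
    intro i j hij
    by_contra hne
    exact hd i j hne (e i) (he1 i) (hij ▸ he1 j)
  have h3 : (Finset.univ.image e).card = 3 := by
    rw [Finset.card_image_of_injective _ hinj]; simp
  have h4 : (Finset.univ.image e) ⊆ (Finset.univ.filter fun e => G.cutMap h e = 1) := by
    intro a ha
    simp only [Finset.mem_image, Finset.mem_univ, true_and] at ha
    obtain ⟨i, rfl⟩ := ha
    simp [he2 i]
  have := Finset.card_le_card h4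
  unfold Small at hh
  omega

open Classical in
lemma menger' (G : Multigraph V E) (x y : V) (k : ℕ)
    (hcut : ∀ h : V → ZMod 2, h x = 1 → h y = 0 →
      k ≤ (Finset.univ.filter fun e => G.cutMap h e = 1).card) :
    ∃ p : Fin k → List (V × E), (∀ i, G.IsTtrail x y (p i)) ∧
      (∀ i j, i ≠ j → EdgeDisjoint (p i) (p j)) := by
  refine G.menger x y k fun S hx hy => ?_
  refine (hcut (fun v => if S v then 1 else 0) (by simp [hx]) (by simp [hy])).trans_eq ?_
  congr 1
  refine Finset.filter_congr fun e _ => ?_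
  rw [cutMap_apply]
  by_cases h1 : S (G.hd e true) <;> by_cases h2 : S (G.hd e false) <;> simp [h1, h2]

lemma kconn_of_sim (G : Multigraph V E) {x y : V} (hs : G.Sim x y) : G.KConn 3 x y := by
  right
  refine G.menger' x y 3 fun h hx hy => ?_
  by_contra hlt
  have := hs h (show _ ≤ 2 by omega)
  rw [hx, hy] at this
  exact absurd this (by decide)

lemma eqvGen_iff_sim (G : Multigraph V E) {x y : V} :
    Relation.EqvGen (G.KConn 3) x y ↔ G.Sim x y := by
  constructor
  · intro h
    induction h with
    | rel x y h => exact G.sim_of_kconn h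
    | refl x => intro _ _; rfl
    | symm x y _ ih => intro h hh; exact (ih h hh).symm
    | trans x y z _ _ h1 h2 => intro h hh; exact (h1 h hh).trans (h2 h hh)
  · intro h; exact Relation.EqvGen.rel _ _ (G.kconn_of_sim h)

lemma eqvGen1_iff (G : Multigraph V E) {x y : V} :
    Relation.EqvGen (G.KConn 1) x y ↔ ∀ h ∈ LinearMap.ker G.cutMap, h x = h y := by
  constructor
  · intro h
    induction h with
    | rel x y h =>
      rcases h with rfl | ⟨p, hp, -⟩
      · intro _ _; rfl
      · intro h hh
        by_contra hne
        obtain ⟨e, -, he⟩ := G.trail_cross (hp 0) hne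
        rw [LinearMap.mem_ker] at hh
        rw [hh] at he
        exact absurd he (by simp)
    | refl x => intro _ _; rfl
    | symm x y _ ih => intro h hh; exact (ih h hh).symm
    | trans x y z _ _ h1 h2 => intro h hh; exact (h1 h hh).trans (h2 h hh)
  · intro hs
    refine Relation.EqvGen.rel _ _ (Or.inr (G.menger' x y 1 fun h hx hy => ?_))
    by_contra hlt
    have h0 : (Finset.univ.filter fun e => G.cutMap h e = 1).card = 0 := by omega
    rw [Finset.card_eq_zero, Finset.filter_eq_empty_iff] at h0
    have := hs h (by
      rw [LinearMap.mem_ker]; funext e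
      exact (zmod2_cases (G.cutMap h e)).resolve_right (h0 (Finset.mem_univ e)))
    rw [hx, hy] at this
    exact absurd this (by decide)

end Cuts

end Multigraph

namespace Multigraph

section Ind

variable {X : Type*} [Fintype X]

open Classical in
/-- class indicator -/
noncomputable def ind (U : Submodule (ZMod 2) (X → ZMod 2)) (x : X) : X → ZMod 2 :=
  fun y => if (∀ c ∈ U, c x = c y) then (1 : ZMod 2) else 0

lemma ind_eq_one {U : Submodule (ZMod 2) (X → ZMod 2)} {x y : X} :
    ind U x y = 1 ↔ ∀ c ∈ U, c x = c y := by
  unfold ind; split_ifs with h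
  · exact ⟨fun _ => h, fun _ => rfl⟩
  · exact ⟨fun h' => absurd h' (by decide), fun h' => absurd h' h⟩

lemma ind_eq_zero {U : Submodule (ZMod 2) (X → ZMod 2)} {x y : X} :
    ind U x y = 0 ↔ ¬ ∀ c ∈ U, c x = c y := by
  rw [← ind_eq_one]
  rcases zmod2_cases (ind U x y) with h | h <;> simp [h]

lemma ind_self (U : Submodule (ZMod 2) (X → ZMod 2)) (x : X) : ind U x x = 1 :=
  ind_eq_one.2 fun _ _ => rfl

lemma ind_mul {U : Submodule (ZMod 2) (X → ZMod 2)} {c : X → ZMod 2} (hc : c ∈ U) {x : X}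
    (hx : c x = 1) : c * ind U x = ind U x := by
  funext y
  rcases zmod2_cases (ind U x y) with h | h
  · simp [h]
  · rw [Pi.mul_apply, h, ← ind_eq_one.1 h c hc, hx, mul_one]

lemma ind_induct {U : Submodule (ZMod 2) (X → ZMod 2)}
    (hmul : ∀ a ∈ U, ∀ b ∈ U, a * b ∈ U) {P : (X → ZMod 2) → Prop} (h0 : P 0)
    (hs : ∀ c ∈ U, ∀ x, ind U x ∈ U → c * ind U x = 0 → P c → P (c + ind U x)) :
    ∀ c ∈ U, P c := by
  classical
  intro c hc
  induction hn : (Finset.univ.filter fun e => c e = 1).card using Nat.strong_induction_on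
    generalizing c with
  | _ n ih =>
    by_cases hc0 : c = 0
    · rw [hc0]; exact h0
    · obtain ⟨x, hx⟩ : ∃ x, c x ≠ 0 := by
        by_contra hcon; push Not at hcon; exact hc0 (funext hcon)
      rw [zmod2_ne_zero] at hx
      have hm : ind U x ∈ U := ind_mem U hmul x c hc hx
      have hmm := ind_mul hc hx
      have hsub : c + ind U x ∈ U := U.add_mem hc hm
      have h1 := ih _ ?_ (c + ind U x) hsub rfl
      · have h2 := hs _ hsub x hm ?_ h1
        · rwa [add_assoc, pi_add_self, add_zero] at h2
        · rw [add_mul, hmm]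
          have : ind U x * ind U x = ind U x := ind_mul hm (ind_self U x)
          rw [this, pi_add_self]
      · rw [← hn]
        apply Finset.card_lt_card
        refine ⟨?_, ?_⟩
        · intro y hy
          simp only [Finset.mem_filter, Finset.mem_univ, true_and] at hy ⊢
          have hy2 := congrFun hmm y
          simp only [Pi.add_apply, Pi.mul_apply] at hy hy2
          revert hy hy2; generalize c y = p; generalize ind U x y = q; revert p q; decide
        · intro hsub
          have := hsub (show x ∈ _ by simp [hx])
          simp [hx, ind_self] at this

end Ind

section Push

variable {V E E' : Type*} [Fintype V] [Fintype E] [DecidableEq V] [DecidableEq E] [Fintype E']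

/-- pushforward -/
def push (π : E' → E) (c : E' → ZMod 2) : E → ZMod 2 := fun e => ∑ p, if π p = e then c p else 0

lemma boundary_push (G : Multigraph V E) (Γ : Multigraph V E') (π : E' → E)
    (h : ∀ p, Γ.ends p = G.ends (π p)) (c : E' → ZMod 2) :
    G.boundary (push π c) = Γ.boundary c := by
  funext v
  change ∑ e, (∑ p, if π p = e then c p else 0) * G.edgeVec e v = ∑ p, c p * Γ.edgeVec p v
  simp_rw [Finset.sum_mul]
  rw [Finset.sum_comm]
  refine Finset.sum_congr rfl fun p _ => ?_
  simp [edgeVec, h]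

open Classical in
lemma two_hat_ind (G : Multigraph V E) {A : Type*} [AddCommGroup A] {f : E → A}
    (hf : G.BalancedE f) {e : E} (he : ind G.WW e ∈ G.WW) : 2 • hat f (ind G.WW e) = 0 := by
  let E2 := {p : E × Bool // p.1 ≠ e ∧ (p.2 = true → ind G.WW e p.1 = 1)}
  let π : E2 → E := fun p => p.1.1
  let Γ : Multigraph V E2 := ⟨fun p => G.ends (π p)⟩
  have hΓ : ∀ p, Γ.ends p = G.ends (π p) := fun _ => rfl
  have hcutΓ : ∀ h p, Γ.cutMap h p = G.cutMap h (π p) := fun h p =>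
    Γ.cutMap_of_ends h (G.ends_hd (π p) true)
  obtain ⟨p, hp, hd⟩ := Γ.menger' (G.hd e true) (G.hd e false) 2 (by
    intro h hx hy
    have hce : G.cutMap h e = 1 := by rw [cutMap_apply, hx, hy, add_zero]
    change 1 < _
    rw [Finset.one_lt_card]
    have key : ∃ p q : E2, p ≠ q ∧ G.cutMap h (π p) = 1 ∧ G.cutMap h (π q) = 1 := by
      by_cases h1 : ∃ e', e' ≠ e ∧ G.cutMap h e' = 1
      · obtain ⟨e', hne, he'⟩ := h1
        by_cases hZ : ind G.WW e e' = 1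
        · exact ⟨⟨(e', false), hne, by simp⟩, ⟨(e', true), hne, fun _ => hZ⟩,
            fun h => by have := congrArg (fun z : E2 => z.1.2) h; simp at this, he', he'⟩
        · by_cases h2 : ∃ e'', e'' ≠ e ∧ e'' ≠ e' ∧ G.cutMap h e'' = 1
          · obtain ⟨e'', hne1, hne2, he''⟩ := h2
            exact ⟨⟨(e', false), hne, by simp⟩, ⟨(e'', false), hne1, by simp⟩,
              fun h => hne2 (congrArg π h).symm, he', he''⟩
          · exfalso; push Not at h2
            have hS : (Finset.univ.filter fun e => G.cutMap h e = 1) = {e, e'} := by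
              ext a
              simp only [Finset.mem_filter, Finset.mem_univ, true_and, Finset.mem_insert,
                Finset.mem_singleton]
              constructor
              · intro ha; by_contra hcon; push Not at hcon; exact h2 a hcon.1 hcon.2 ha
              · rintro (rfl | rfl) <;> assumption
            have hsm : G.Small h := by unfold Small; rw [hS, Finset.card_pair hne.symm]
            apply hZ
            rw [ind_eq_one]
            intro c hc
            have := hc h hsm
            rw [sum_cut, hS, Finset.sum_pair hne.symm] at this
            revert this; generalize c e = a; generalize c e' = b; revert a b; decide
      · exfalso; push Not at h1
        have hS : (Finset.univ.filter fun e => G.cutMap h e = 1) = {e} := by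
          ext a
          simp only [Finset.mem_filter, Finset.mem_univ, true_and, Finset.mem_singleton]
          constructor
          · intro ha; by_contra hcon; exact h1 a hcon ha
          · rintro rfl; assumption
        have hsm : G.Small h := by unfold Small; rw [hS, Finset.card_singleton]; norm_num
        have := he h hsm
        rw [sum_cut, hS, Finset.sum_singleton, ind_self] at this
        exact absurd this (by decide)
    obtain ⟨p, q, hpq, h1, h2⟩ := key
    exact ⟨p, by simp [hcutΓ, h1], q, by simp [hcutΓ, h2], hpq⟩)
  let c : Fin 2 → E → ZMod 2 := fun i => push π (eps (p i)) + Pi.single e 1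
  have hb : ∀ i, G.boundary (c i) = 0 := by
    intro i
    rw [map_add, boundary_push G Γ π hΓ, Γ.boundary_eps (hp i),
      G.boundary_single (G.ends_hd e true)]
    exact pi_add_self _
  have hW : ∀ i, c i ∈ G.WW := fun i => G.mem_WW_of_boundary (hb i)
  have hce : ∀ i, c i e = 1 := by
    intro i
    have : push π (eps (p i)) e = 0 :=
      Finset.sum_eq_zero fun q _ => if_neg q.2.1
    simp [c, this]
  have hprod : c 0 * c 1 = ind G.WW e := by
    funext e'
    rw [Pi.mul_apply]
    rcases zmod2_cases (ind G.WW e e') with hZ | hZ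
    · rw [hZ]
      have hne : e' ≠ e := by
        rintro rfl; rw [ind_self] at hZ; exact absurd hZ (by decide)
      have hpush : ∀ i, c i e' = eps (p i) ⟨(e', false), hne, by simp⟩ := by
        intro i
        simp only [c, Pi.add_apply, Pi.single_apply, if_neg hne, add_zero]
        unfold push
        rw [Finset.sum_eq_single ⟨(e', false), hne, by simp⟩]
        · rw [if_pos rfl]
        · rintro ⟨⟨a, b⟩, h1, h2⟩ _ hq
          rw [if_neg]
          rintro rfl
          cases b
          · exact hq rfl
          · have := h2 rfl
            simp only [π] at hZ
            rw [hZ] at this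
            exact absurd this (by decide)
        · intro h; exact absurd (Finset.mem_univ _) h
      rw [hpush, hpush]
      have := hd 0 1 (by decide) ⟨(e', false), hne, by simp⟩
      unfold eps
      by_cases hm : (⟨(e', false), hne, by simp⟩ : E2) ∈ List.map Prod.snd (p 0)
      · rw [if_neg (this hm), mul_zero]
      · rw [if_neg hm, zero_mul]
    · rw [hZ, ← ind_eq_one.1 hZ _ (hW 0), ← ind_eq_one.1 hZ _ (hW 1), hce, hce, mul_one]
  have h1 := hat_add f (c 0) (c 1)
  rw [hprod, G.euler hf _ (hb 0), G.euler hf _ (hb 1), G.euler hf (c 0 + c 1) (by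
    rw [map_add, hb, hb, add_zero]), zero_add, add_zero] at h1
  exact h1

lemma two_hat (G : Multigraph V E) {A : Type*} [AddCommGroup A] {f : E → A}
    (hf : G.BalancedE f) : ∀ c ∈ G.WW, 2 • hat f c = 0 := by
  refine ind_induct (P := fun c => 2 • hat f c = 0) G.WW_mul ?_ ?_
  · rw [hat_zero, smul_zero]
  · intro c hc x hx hcx h
    have h1 := hat_add f c (ind G.WW x)
    rw [hcx, hat_zero, smul_zero, add_zero] at h1
    rw [h1, smul_add, h, G.two_hat_ind hf hx, add_zero]

lemma hat_add_WW (G : Multigraph V E) {A : Type*} [AddCommGroup A] {f : E → A}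
    (hf : G.BalancedE f) {c c' : E → ZMod 2} (hc : c ∈ G.WW) (hc' : c' ∈ G.WW) :
    hat f (c + c') = hat f c + hat f c' := by
  rw [← hat_add, G.two_hat hf _ (G.WW_mul c hc c' hc'), add_zero]

end Push

end Multigraph

namespace Multigraph

section Rep

variable {X : Type*} [Fintype X]

/-- the classes of a function space -/
def cls (U : Submodule (ZMod 2) (X → ZMod 2)) : Setoid X where
  r x y := ∀ c ∈ U, c x = c y
  iseqv := ⟨fun _ _ _ => rfl, fun h c hc => (h c hc).symm, fun h h' c hc => (h c hc).trans (h' c hc)⟩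

/-- class representative -/
noncomputable def rep (U : Submodule (ZMod 2) (X → ZMod 2)) (x : X) : X :=
  (Quotient.mk (cls U) x).out

lemma rep_spec (U : Submodule (ZMod 2) (X → ZMod 2)) (x : X) : ∀ c ∈ U, c (rep U x) = c x := by
  have h : (cls U).r (rep U x) x := Quotient.exact (Quotient.out_eq (Quotient.mk (cls U) x))
  exact h

lemma rep_eq {U : Submodule (ZMod 2) (X → ZMod 2)} {x y : X} (h : ∀ c ∈ U, c x = c y) :
    rep U x = rep U y := by
  unfold rep
  rw [Quotient.sound (s := cls U) (a := x) (b := y) h]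

lemma rep_rep (U : Submodule (ZMod 2) (X → ZMod 2)) (x : X) : rep U (rep U x) = rep U x :=
  rep_eq (rep_spec U x)

lemma ind_congr {U : Submodule (ZMod 2) (X → ZMod 2)} {x y : X} (h : ∀ c ∈ U, c x = c y) :
    ind U x = ind U y := by
  funext z
  unfold ind
  congr 1
  exact propext ⟨fun h' c hc => (h c hc).symm.trans (h' c hc), fun h' c hc => (h c hc).trans (h' c hc)⟩

/-- live representatives -/
def Live (U : Submodule (ZMod 2) (X → ZMod 2)) (x : X) : Prop := rep U x = x ∧ ind U x ∈ U

lemma ind_live {U : Submodule (ZMod 2) (X → ZMod 2)} {x y : X} (hx : Live U x) (hy : Live U y) :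
    ind U x y = 1 ↔ x = y := by
  rw [ind_eq_one]
  constructor
  · intro h; rw [← hx.1, ← hy.1]; exact rep_eq h
  · rintro rfl _ _; rfl

lemma live_rep {U : Submodule (ZMod 2) (X → ZMod 2)} {x : X} (h : ind U x ∈ U) :
    Live U (rep U x) := by
  refine ⟨rep_rep U x, ?_⟩
  rw [ind_congr (rep_spec U x)]; exact h

open Classical in
lemma finrank_live (U : Submodule (ZMod 2) (X → ZMod 2))
    (hmul : ∀ a ∈ U, ∀ b ∈ U, a * b ∈ U) :
    Module.finrank (ZMod 2) U = Fintype.card {x // Live U x} := by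
  let L : U →ₗ[ZMod 2] ({x // Live U x} → ZMod 2) :=
    { toFun := fun c x => c.1 x.1
      map_add' := fun _ _ => rfl
      map_smul' := fun _ _ => rfl }
  have hb : Function.Bijective L := by
    constructor
    · rw [injective_iff_map_eq_zero]
      intro c hc
      ext x
      by_contra hne
      have h1 : c.1 x = 1 := zmod2_ne_zero.1 hne
      have hl := live_rep (ind_mem U hmul x c.1 c.2 h1)
      have h2 : c.1 (rep U x) = 0 := congrFun hc ⟨_, hl⟩
      rw [rep_spec U x c.1 c.2, h1] at h2
      exact absurd h2 (by decide)
    · intro a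
      refine ⟨⟨∑ x : {x // Live U x}, a x • ind U x.1, U.sum_mem fun x _ => U.smul_mem _ x.2.2⟩, ?_⟩
      funext y
      change (∑ x : {x // Live U x}, a x • ind U x.1) y.1 = a y
      rw [Finset.sum_apply, Finset.sum_eq_single y]
      · simp [ind_self]
      · intro x _ hne
        have : ind U x.1 y.1 ≠ 1 := fun h => hne (Subtype.ext ((ind_live x.2 y.2).1 h))
        rw [Pi.smul_apply, (zmod2_cases _).resolve_right this, smul_zero]
      · intro h; exact absurd (Finset.mem_univ _) h
  rw [(LinearEquiv.ofBijective L hb).finrank_eq, Module.finrank_fintype_fun_eq_card]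

open Classical in
lemma finrank_one (U : Submodule (ZMod 2) (X → ZMod 2))
    (hmul : ∀ a ∈ U, ∀ b ∈ U, a * b ∈ U) (h1 : (1 : X → ZMod 2) ∈ U) :
    Module.finrank (ZMod 2) U = Nat.card {x // rep U x = x} := by
  rw [finrank_live U hmul, ← Nat.card_eq_fintype_card]
  refine Nat.card_congr (Equiv.subtypeEquivRight fun x => ?_)
  exact ⟨fun h => h.1, fun h => ⟨h, ind_mem U hmul x 1 h1 rfl⟩⟩

open Classical in
lemma card_rep (U : Submodule (ZMod 2) (X → ZMod 2)) :
    Nat.card (Quotient (cls U)) = Nat.card {x // rep U x = x} := by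
  refine Nat.card_congr ⟨fun q => ⟨q.out, ?_⟩, fun x => Quotient.mk (cls U) x.1, ?_, ?_⟩
  · unfold rep; rw [Quotient.out_eq]
  · intro q; exact Quotient.out_eq q
  · intro x; exact Subtype.ext x.2

variable {A : Type*} [AddCommGroup A] [DecidableEq X]

/-- functions killed by U -/
def KK (U : Submodule (ZMod 2) (X → ZMod 2)) (A : Type*) [AddCommGroup A] :
    AddSubgroup (X → A) where
  carrier := {f | ∀ c ∈ U, hat f c = 0}
  zero_mem' := by intro c _; simp [hat]
  add_mem' := by intro a b ha hb c hc; rw [hat_fadd, ha c hc, hb c hc, add_zero]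
  neg_mem' := by intro a ha c hc; rw [hat_fneg, ha c hc, neg_zero]

lemma mem_KK {U : Submodule (ZMod 2) (X → ZMod 2)}
    (hmul : ∀ a ∈ U, ∀ b ∈ U, a * b ∈ U) {f : X → A}
    (h : ∀ x, Live U x → hat f (ind U x) = 0) : f ∈ KK U A := by
  refine ind_induct (P := fun c => hat f c = 0) hmul (hat_zero f) ?_
  intro c hc x hx hcx h0
  have h1 := hat_add f c (ind U x)
  rw [hcx, hat_zero, smul_zero, add_zero] at h1
  rw [h1, h0, zero_add, ← ind_congr (rep_spec U x)]
  exact h _ (live_rep hx)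

open Classical in
lemma hat_live {U : Submodule (ZMod 2) (X → ZMod 2)} (f : X → A) {x : X} (hx : Live U x) :
    hat f (ind U x) = f x + ∑ y : {y // ¬ Live U y}, (ind U x y.1).val • f y.1 := by
  unfold hat
  rw [← Fintype.sum_subtype_add_sum_subtype (fun y => Live U y)]
  congr 1
  rw [Finset.sum_eq_single ⟨x, hx⟩]
  · rw [ind_self]; exact one_smul ℕ _
  · intro y _ hne
    have : ind U x y.1 ≠ 1 := fun h => hne (Subtype.ext ((ind_live hx y.2).1 h).symm)
    rw [(zmod2_cases _).resolve_right this]; simp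
  · intro h; exact absurd (Finset.mem_univ _) h

open Classical in
lemma KK_equiv (U : Submodule (ZMod 2) (X → ZMod 2))
    (hmul : ∀ a ∈ U, ∀ b ∈ U, a * b ∈ U) (A : Type*) [AddCommGroup A] :
    Nonempty (KK U A ≃+ ({x // ¬ Live U x} → A)) := by
  let L : KK U A →+ ({x // ¬ Live U x} → A) :=
    { toFun := fun f x => f.1 x.1
      map_add' := fun _ _ => rfl
      map_zero' := rfl }
  refine ⟨AddEquiv.ofBijective L ⟨?_, ?_⟩⟩
  · rw [injective_iff_map_eq_zero]
    intro f hf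
    ext x
    by_cases hx : Live U x
    · have h1 := f.2 _ hx.2
      rw [hat_live f.1 hx, Finset.sum_eq_zero, add_zero] at h1
      · exact h1
      · intro y _
        have : f.1 y.1 = 0 := congrFun hf y
        rw [this, smul_zero]
    · exact congrFun hf ⟨x, hx⟩
  · intro g
    let f : X → A := fun x => if hx : Live U x then
      - ∑ y : {y // ¬ Live U y}, (ind U x y.1).val • g y else g ⟨x, hx⟩
    have hf : ∀ y : {y // ¬ Live U y}, f y.1 = g y := fun y => dif_neg y.2
    refine ⟨⟨f, mem_KK hmul fun x hx => ?_⟩, ?_⟩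
    · rw [hat_live f hx]
      simp_rw [hf]
      simp only [f, dif_pos hx, neg_add_cancel]
    · funext y; exact hf y

end Rep

section Count

variable {V E : Type*} [Fintype V] [Fintype E] [DecidableEq V] [DecidableEq E]

open Classical in
lemma conk3_eq (G : Multigraph V E) :
    G.conk 3 = Nat.card {x // rep G.BB x = x} := by
  rw [← card_rep]
  have : Relation.EqvGen.setoid (G.KConn 3) = cls G.BB := by
    ext x y
    change Relation.EqvGen (G.KConn 3) x y ↔ ∀ c ∈ G.BB, c x = c y
    rw [eqvGen_iff_sim, sim_iff_BB]
  unfold conk; rw [this]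

lemma conk3_finrank (G : Multigraph V E) : G.conk 3 = Module.finrank (ZMod 2) G.BB := by
  rw [conk3_eq, finrank_one _ G.BB_mul G.one_mem_BB]

lemma ker_mul (G : Multigraph V E) :
    ∀ a ∈ LinearMap.ker G.cutMap, ∀ b ∈ LinearMap.ker G.cutMap, a * b ∈ LinearMap.ker G.cutMap := by
  intro a ha b hb
  rw [LinearMap.mem_ker] at *
  funext e
  have h1 := congrFun ha e
  have h2 := congrFun hb e
  simp only [cutMap_apply, Pi.mul_apply, Pi.zero_apply] at *
  have key : ∀ p q r t : ZMod 2, p + q = 0 → r + t = 0 → p * r + q * t = 0 := by decide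
  exact key _ _ _ _ h1 h2

lemma con_finrank (G : Multigraph V E) :
    G.con = Module.finrank (ZMod 2) (LinearMap.ker G.cutMap) := by
  rw [finrank_one _ G.ker_mul (LinearMap.mem_ker.2 G.cutMap_one), ← card_rep]
  have : Relation.EqvGen.setoid (G.KConn 1) = cls (LinearMap.ker G.cutMap) := by
    ext x y
    exact G.eqvGen1_iff
  unfold con conk; rw [this]

lemma finrank_map_BB (G : Multigraph V E) :
    Module.finrank (ZMod 2) (G.BB.map G.cutMap) + G.con = G.conk 3 := by
  rw [conk3_finrank, con_finrank]
  rw [← LinearMap.finrank_range_add_finrank_ker (G.cutMap.domRestrict G.BB)]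
  congr 1
  · rw [LinearMap.range_domRestrict]
  · rw [LinearMap.ker_domRestrict]
    have hle : LinearMap.ker G.cutMap ≤ G.BB := fun h hh => G.small_mem_BB (G.small_of_ker hh)
    exact (Submodule.comapSubtypeEquivOfLe hle).finrank_eq.symm

lemma finrank_WW (G : Multigraph V E) :
    Module.finrank (ZMod 2) (G.BB.map G.cutMap) + Module.finrank (ZMod 2) G.WW =
      Fintype.card E := by
  have h1 : G.WW = (G.BB.map G.cutMap).dualAnnihilator.map
      (dotProductEquiv (ZMod 2) E).symm.toLinearMap := by
    ext c
    rw [Submodule.mem_map_equiv, LinearEquiv.symm_symm, Submodule.mem_dualAnnihilator]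
    constructor
    · rintro hc _ ⟨h, hh, rfl⟩
      exact G.WW_BB hc hh
    · intro hc h hh
      exact hc _ ⟨h, G.small_mem_BB hh, rfl⟩
  rw [h1, LinearEquiv.finrank_map_eq]
  rw [Subspace.finrank_add_finrank_dualAnnihilator_eq, Module.finrank_fintype_fun_eq_card]

open Classical in
lemma card_nonlive (G : Multigraph V E) :
    Fintype.card {e // ¬ Live G.WW e} = G.conk 3 - G.con := by
  have h1 := G.finrank_WW
  have h2 := G.finrank_map_BB
  rw [finrank_live _ G.WW_mul] at h1
  have h3 := Fintype.card_subtype_compl (fun e => Live G.WW e)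
  omega

open Classical in
lemma card_nonrep (G : Multigraph V E) :
    Fintype.card {v // ¬ rep G.BB v = v} = Fintype.card V - G.conk 3 := by
  rw [Fintype.card_subtype_compl, conk3_eq, Nat.card_eq_fintype_card]

end Count

end Multigraph

namespace Multigraph

section Main

variable {V E : Type*} [Fintype V] [Fintype E] [DecidableEq V] [DecidableEq E]
  {A : Type*} [AddCommGroup A]

noncomputable instance torMod : Module (ZMod 2) (torsion2 A) :=
  AddCommGroup.zmodModule (fun x => Subtype.ext x.2)

lemma hat_tor (m : E → torsion2 A) (c : E → ZMod 2) :
    hat (fun e => (m e : A)) c = ((∑ e, c e • m e : torsion2 A) : A) := by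
  unfold hat
  rw [AddSubgroup.val_finsetSum]
  refine Finset.sum_congr rfl fun e _ => ?_
  rcases zmod2_cases (c e) with h | h <;> rw [h]
  · rw [zero_smul]; exact zero_smul ℕ _
  · rw [one_smul]; exact one_smul ℕ _

/-- coboundary -/
noncomputable def dd (G : Multigraph V E) (A : Type*) [AddCommGroup A] :
    (V → torsion2 A) →+ (E → A) where
  toFun g := fun e => ((g (G.hd e true) + g (G.hd e false) : torsion2 A) : A)
  map_zero' := by funext e; simp
  map_add' a b := by funext e; simp; abel

lemma hat_dd (G : Multigraph V E) (g : V → torsion2 A) (c : E → ZMod 2) :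
    hat (G.dd A g) c = ((∑ v, G.boundary c v • g v : torsion2 A) : A) := by
  rw [← G.adj c g]
  exact hat_tor (fun e => g (G.hd e true) + g (G.hd e false)) c

lemma boundary_closed (G : Multigraph V E) {x : V} {p : List (V × E)} (h : G.IsTtrail x x p) :
    G.boundary (eps p) = 0 := by
  rw [G.boundary_eps h]; exact pi_add_self _

lemma dd_mem (G : Multigraph V E) (g : V → torsion2 A) : G.dd A g ∈ G.Hgroup A := by
  intro x p hp
  rw [← hat_eps _ hp.2, hat_dd, G.boundary_closed hp]
  simp

lemma KK_mem (G : Multigraph V E) {f : E → A} (hf : f ∈ KK G.WW A) : f ∈ G.Hgroup A := by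
  intro x p hp
  rw [← hat_eps _ hp.2]
  exact hf _ (G.mem_WW_of_boundary (G.boundary_closed hp))

lemma sum_rep (G : Multigraph V E) {c : E → ZMod 2} (hc : c ∈ G.WW) (g : V → torsion2 A) :
    ∑ v, G.boundary c v • g (rep G.BB v) = 0 := by
  have h1 : ∀ v, G.boundary c v • g (rep G.BB v) =
      ∑ w, (G.boundary c v * (if rep G.BB v = w then 1 else 0)) • g w := by
    intro v
    simp [ite_smul]
  simp_rw [h1]
  rw [Finset.sum_comm]
  refine Finset.sum_eq_zero fun w _ => ?_
  rw [← Finset.sum_smul]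
  have h2 : (fun v => if rep G.BB v = w then (1 : ZMod 2) else 0) ∈ G.BB := by
    by_cases hw : rep G.BB w = w
    · have hm : ind G.BB w ∈ G.BB := ind_mem G.BB G.BB_mul w 1 G.one_mem_BB rfl
      convert hm using 1
      funext v
      by_cases h : rep G.BB v = w
      · rw [if_pos h, ind_eq_one.2]
        rw [← h]; exact rep_spec G.BB v
      · rw [if_neg h, ind_eq_zero.2]
        intro h'; apply h; rw [← rep_eq h', hw]
    · convert G.BB.zero_mem using 1
      funext v
      rw [if_neg, Pi.zero_apply]
      rintro rfl; exact hw (rep_rep _ _)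
  have h3 := G.WW_BB hc h2
  rw [adj2] at h3
  rw [h3, zero_smul]

open Classical in
/-- extension by zero -/
noncomputable def ext0 (G : Multigraph V E) (A : Type*) [AddCommGroup A] :
    ({v // ¬ rep G.BB v = v} → torsion2 A) →+ (V → torsion2 A) where
  toFun u := fun v => if h : ¬ rep G.BB v = v then u ⟨v, h⟩ else 0
  map_zero' := by funext v; simp
  map_add' a b := by
    funext v
    by_cases h : rep G.BB v = v <;> simp [h]

lemma ext0_neg (G : Multigraph V E) (u : {v // ¬ rep G.BB v = v} → torsion2 A) {v : V}
    (h : ¬ rep G.BB v = v) : G.ext0 A u v = u ⟨v, h⟩ := dif_pos h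

lemma ext0_pos (G : Multigraph V E) (u : {v // ¬ rep G.BB v = v} → torsion2 A) {v : V}
    (h : rep G.BB v = v) : G.ext0 A u v = 0 := dif_neg (not_not.2 h)

/-- the main map -/
noncomputable def Phi (G : Multigraph V E) (A : Type*) [AddCommGroup A] :
    (KK G.WW A × ({v // ¬ rep G.BB v = v} → torsion2 A)) →+ G.Hgroup A where
  toFun x := ⟨x.1.1 + G.dd A (G.ext0 A x.2),
    (G.Hgroup A).add_mem (G.KK_mem x.1.2) (G.dd_mem _)⟩
  map_zero' := by apply Subtype.ext; simp
  map_add' a b := by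
    apply Subtype.ext
    simp only [Prod.fst_add, Prod.snd_add, AddSubgroup.coe_add, map_add]
    abel

lemma Phi_inj (G : Multigraph V E) : Function.Injective (G.Phi A) := by
  rw [injective_iff_map_eq_zero]
  rintro ⟨k, u⟩ h
  have h0 : k.1 + G.dd A (G.ext0 A u) = 0 := congrArg Subtype.val h
  have hu : u = 0 := by
    funext v
    have hsim : ∀ h ∈ G.BB, h (rep G.BB v.1) = h v.1 := rep_spec G.BB v.1
    rcases G.kconn_of_sim (G.sim_iff_BB.2 hsim) with h1 | ⟨p, hp, -⟩
    · exact absurd h1 v.2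
    · have hb := G.boundary_eps (hp 0)
      have hW : eps (p 0) ∈ G.WW := G.mem_WW_of_BB fun h hh => by
        rw [hb, sum_vert_mul, hsim h hh]; exact CharTwo.add_self_eq_zero _
      have h2 : hat (k.1 + G.dd A (G.ext0 A u)) (eps (p 0)) = 0 := by
        rw [h0]; simp [hat]
      rw [hat_fadd, k.2 _ hW, zero_add, hat_dd, hb] at h2
      have h3 : ∑ w, (vert (rep G.BB v.1) + vert v.1) w • G.ext0 A u w =
          G.ext0 A u (rep G.BB v.1) + G.ext0 A u v.1 := by
        simp [vert, add_smul, Finset.sum_add_distrib]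
      rw [h3, G.ext0_pos u (rep_rep _ _), zero_add, G.ext0_neg u v.2] at h2
      exact Subtype.ext h2
  subst hu
  simp only [map_zero, add_zero] at h0
  exact Prod.ext (Subtype.ext h0) rfl

lemma exists_factor {F X Y M : Type*} [Field F] [AddCommGroup X] [Module F X] [AddCommGroup Y]
    [Module F Y] [AddCommGroup M] [Module F M] (B : X →ₗ[F] Y) (L : X →ₗ[F] M)
    (h : LinearMap.ker B ≤ LinearMap.ker L) : ∃ g : Y →ₗ[F] M, ∀ x, g (B x) = L x := by
  obtain ⟨g, hg⟩ := LinearMap.exists_extend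
    (((LinearMap.ker B).liftQ L h).comp B.quotKerEquivRange.symm.toLinearMap)
  refine ⟨g, fun x => ?_⟩
  have := LinearMap.congr_fun hg ⟨B x, x, rfl⟩
  simp only [LinearMap.comp_apply, Submodule.subtype_apply, LinearEquiv.coe_coe] at this
  rw [this]
  have h2 : B.quotKerEquivRange.symm ⟨B x, x, rfl⟩ = Submodule.Quotient.mk x := by
    rw [LinearEquiv.symm_apply_eq]; rfl
  rw [h2]; rfl

lemma exists_g (G : Multigraph V E) {f : E → A} (hf : f ∈ G.Hgroup A) :
    ∃ g : V → torsion2 A, ∀ c ∈ G.WW, hat (G.dd A g) c = hat f c := by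
  have hf' : G.BalancedE f := hf
  let L0 : G.WW →+ torsion2 A :=
    { toFun := fun c => ⟨hat f c.1, G.two_hat hf' c.1 c.2⟩
      map_zero' := Subtype.ext (hat_zero f)
      map_add' := fun a b => Subtype.ext (G.hat_add_WW hf' a.2 b.2) }
  obtain ⟨L, hL⟩ := LinearMap.exists_extend (AddMonoidHom.toZModLinearMap 2 L0)
  have hL' : ∀ c, ∀ hc : c ∈ G.WW, L c = ⟨hat f c, G.two_hat hf' c hc⟩ := fun c hc =>
    LinearMap.congr_fun hL ⟨c, hc⟩
  obtain ⟨gt, hgt⟩ := exists_factor G.boundary L (by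
    intro c hc
    rw [LinearMap.mem_ker] at *
    rw [hL' c (G.mem_WW_of_boundary hc)]
    exact Subtype.ext (G.euler hf' c hc))
  refine ⟨fun v => gt (Pi.single v 1), fun c hc => ?_⟩
  have h1 : ∑ v, G.boundary c v • gt (Pi.single v 1) = gt (G.boundary c) := by
    rw [LinearMap.pi_apply_eq_sum_univ gt (G.boundary c)]
    refine Finset.sum_congr rfl fun v _ => ?_
    congr 2
    funext w
    by_cases h : v = w
    · subst h; simp
    · rw [Pi.single_eq_of_ne (Ne.symm h), if_neg h]
  rw [hat_dd, h1, hgt, hL' c hc]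

lemma Phi_surj (G : Multigraph V E) : Function.Surjective (G.Phi A) := by
  rintro ⟨f, hf⟩
  obtain ⟨g, hg⟩ := G.exists_g hf
  let g' : V → torsion2 A := g - fun v => g (rep G.BB v)
  have hg' : ∀ c ∈ G.WW, hat (G.dd A g') c = hat f c := by
    intro c hc
    rw [← hg c hc, hat_dd, hat_dd]
    congr 1
    simp only [g', Pi.sub_apply, smul_sub, Finset.sum_sub_distrib]
    rw [G.sum_rep hc g, sub_zero]
  have hext : G.ext0 A (fun v => g' v.1) = g' := by
    funext v
    by_cases h : rep G.BB v = v
    · rw [G.ext0_pos _ h]; simp [g', h]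
    · rw [G.ext0_neg _ h]
  refine ⟨(⟨f - G.dd A g', ?_⟩, fun v => g' v.1), ?_⟩
  · intro c hc
    rw [sub_eq_add_neg, hat_fadd, hat_fneg, hg' c hc, add_neg_cancel]
  · apply Subtype.ext
    change f - G.dd A g' + G.dd A (G.ext0 A (fun v => g' v.1)) = f
    rw [hext, sub_add_cancel]

end Main

end Multigraph

namespace Multigraph

variable {V E : Type*} [Fintype V] [Fintype E] [DecidableEq V] [DecidableEq E]


theorem stmt11 (G : Multigraph V E) (A : Type*) [AddCommGroup A] :
    Nonempty ((G.Hgroup A) ≃+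
      ((Fin (G.conk 3 - G.con) → A) ×
        (Fin (Fintype.card V - G.conk 3) → torsion2 A))) := by
  classical
  obtain ⟨e1⟩ := KK_equiv G.WW G.WW_mul A
  let e2 := (AddEquiv.ofBijective (G.Phi A) ⟨G.Phi_inj, G.Phi_surj⟩).symm
  let i1 : {e // ¬ Live G.WW e} ≃ Fin (G.conk 3 - G.con) :=
    Fintype.equivFinOfCardEq G.card_nonlive
  let i2 : {v // ¬ rep G.BB v = v} ≃ Fin (Fintype.card V - G.conk 3) :=
    Fintype.equivFinOfCardEq (by rw [← G.card_nonrep])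
  exact ⟨e2.trans (AddEquiv.prodCongr (e1.trans (AddEquiv.arrowCongr i1 (AddEquiv.refl A)))
    (AddEquiv.arrowCongr i2 (AddEquiv.refl _)))⟩

end Multigraph
end

section
/- Let G be a finite undirected multigraph and A an Abelian group. If a function g:V→A is balanceable, then for any two 3-edge-connected vertices v and w of G, the element g(v)−g(w) belongs to 2A, the image of the doubling map a↦2a on A. -/
open Finset

namespace Multigraph

section Helpers

variable {V E : Type*}

theorem chain_append (G : Multigraph V E) (x y z : V) (p q : List (V × E))
    (hp : G.IsChain x y p) (hq : G.IsChain y z q) : G.IsChain x z (p ++ q) := by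
  induction p generalizing x with
  | nil => cases hp; exact hq
  | cons a t ih =>
    obtain ⟨u, e⟩ := a
    obtain ⟨h1, w, h2, h3⟩ := hp
    exact ⟨h1, w, h2, ih w h3⟩

theorem pathSum_append' {A : Type*} [AddCommGroup A] (g : V → A) (f : E → A)
    (p q : List (V × E)) : pathSum g f (p ++ q) = pathSum g f p + pathSum g f q := by
  simp [pathSum]

theorem chain_rev (G : Multigraph V E) {A : Type*} [AddCommGroup A] (g : V → A) (f : E → A)
    (x y : V) (p : List (V × E)) (hp : G.IsChain x y p) :
    ∃ q, G.IsChain y x q ∧ q.map Prod.snd = (p.map Prod.snd).reverse ∧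
      pathSum g f q + g x = pathSum g f p + g y := by
  induction p generalizing x with
  | nil => cases hp; exact ⟨[], rfl, rfl, rfl⟩
  | cons a t ih =>
    obtain ⟨u, e⟩ := a
    obtain ⟨rfl, w, h2, h3⟩ := hp
    obtain ⟨q, hq, hm, hs⟩ := ih w h3
    refine ⟨q ++ [(w, e)], chain_append G y w u q _ hq ⟨rfl, u, ?_, rfl⟩, by simp [hm], ?_⟩
    · rw [h2, Sym2.eq_swap]
    · have h : pathSum g f [(w, e)] = g w + f e := by simp [pathSum]
      rw [pathSum_append', h, pathSum_cons]
      calc _ = (pathSum g f q + g w) + f e + g u := by abel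
        _ = _ := by rw [hs]; abel

theorem pair_sum (G : Multigraph V E) {A : Type*} [AddCommGroup A] (g : V → A) (f : E → A)
    (hf : ∀ x p, G.IsTtrail x x p → pathSum g f p = 0) (x y : V) (p q : List (V × E))
    (hp : G.IsTtrail x y p) (hq : G.IsTtrail x y q) (hd : EdgeDisjoint p q) :
    pathSum g f p + pathSum g f q = g x - g y := by
  obtain ⟨r, hr, hm, hs⟩ := chain_rev G g f x y q hq.1
  have h := hf x (p ++ r) ⟨chain_append G x y x p r hp.1 hr, by
    rw [List.map_append, hm]
    refine List.Nodup.append hp.2 (List.nodup_reverse.2 hq.2) ?_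
    intro e he he'
    exact hd e he (List.mem_reverse.1 he')⟩
  rw [pathSum_append'] at h
  calc _ = pathSum g f p + (pathSum g f q + g y) - g y := by abel
    _ = (pathSum g f p + pathSum g f r) + g x - g y := by rw [← hs]; abel
    _ = _ := by rw [h]; abel

end Helpers

variable {V E : Type*} [Fintype V] [Fintype E] [DecidableEq V] [DecidableEq E]


theorem stmt12 (G : Multigraph V E) {A : Type*} [AddCommGroup A] (g : V → A)
    (hg : G.Balanceable g) (v w : V) (hvw : G.KConn 3 v w) :
    g v - g w ∈ double2 A := by
  obtain ⟨f, hf⟩ := hg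
  rcases hvw with rfl | ⟨p, hp, hd⟩
  · rw [sub_self]; exact zero_mem _
  have h01 := pair_sum G g f hf v w _ _ (hp 0) (hp 1) (hd 0 1 (by decide))
  have h02 := pair_sum G g f hf v w _ _ (hp 0) (hp 2) (hd 0 2 (by decide))
  have h12 := pair_sum G g f hf v w _ _ (hp 1) (hp 2) (hd 1 2 (by decide))
  have h : pathSum g f (p 1) = pathSum g f (p 2) := add_left_cancel (h01.trans h02.symm)
  refine ⟨pathSum g f (p 1), ?_⟩
  rw [← h12, ← h, two_nsmul]

end Multigraph
end

section
/- Let G be a finite undirected multigraph and A an Abelian group. For any vertex v of G and any a∈A, the function g:V→A defined by g(v)=2a and g(w)=0 for all vertices w≠v is balanceable. -/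
open Finset

namespace Multigraph

variable {V E : Type*} [Fintype V] [Fintype E] [DecidableEq V] [DecidableEq E]


theorem stmt13 (G : Multigraph V E) {A : Type*} [AddCommGroup A] (v : V) (a : A) :
    G.Balanceable (fun w => if w = v then 2 • a else 0) := by
  let h : V → A := fun w => if w = v then a else 0
  let f : E → A := fun e => - Sym2.lift ⟨fun x y => h x + h y, fun _ _ => add_comm _ _⟩ (G.ends e)
  have key : ∀ (p : List (V × E)) (x y : V), G.IsChain x y p →
      pathSum (fun w => if w = v then 2 • a else 0) f p = h x - h y := by
    intro p
    induction p with
    | nil =>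
      intro x y hp
      have hxy : x = y := hp
      simp [pathSum, hxy]
    | cons q t ih =>
      obtain ⟨u, e⟩ := q
      intro x y hp
      obtain ⟨rfl, w, hw, ht⟩ := hp
      rw [pathSum_cons, ih w y ht]
      have hf : f e = -(h u + h w) := by
        simp only [f, hw, Sym2.lift_mk]
      have hg : (if u = v then 2 • a else 0) = h u + h u := by
        by_cases huv : u = v <;> simp [h, huv, two_nsmul]
      simp only [hf, hg]
      abel
  exact ⟨f, fun x p hp => by rw [key p x x hp.1, sub_self]⟩

end Multigraph
end

section
/- Let G be a finite undirected multigraph and A an Abelian group. For any equivalence class T of 3-edge-connected vertices of G and any a∈A, the function g:V→A defined by g(w)=a for all w∈T and g(u)=0 for all vertices u∉T is balanceable. -/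
open Finset

namespace Multigraph
open Classical in
lemma aux_flow {V E : Type*} [Fintype V] [Fintype E] (src tgt : E → V) (F : Finset E) :
    ∀ b : V → ℤ, (∑ v, b v = 0) →
      (∀ S : Finset V, ∑ v ∈ S, b v ≤
        ∑ e ∈ F, (if (src e ∈ S ↔ tgt e ∈ S) then (0:ℤ) else 1)) →
      ∃ φ : E → ℤ, (∀ e, |φ e| ≤ 1) ∧ (∀ e, e ∉ F → φ e = 0) ∧
        ∀ v, b v = ∑ e, φ e * ((if src e = v then 1 else 0) - (if tgt e = v then 1 else 0)) := by
  induction F using Finset.induction_on with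
  | empty =>
    intro b hb h
    refine ⟨0, by simp, by simp, ?_⟩
    intro v
    have h1 := h {v}
    have h2 := h (Finset.univ.erase v)
    have h3 := Finset.add_sum_erase Finset.univ b (Finset.mem_univ v)
    simp at h1 h2
    simp
    linarith
  | insert e0 F he ih =>
    intro b hb h
    have key : ∃ j : ℤ, |j| ≤ 1 ∧ ∀ S : Finset V,
        ∑ v ∈ S, b v - j * ((if src e0 ∈ S then 1 else 0) - (if tgt e0 ∈ S then 1 else 0)) ≤
        ∑ e ∈ F, (if (src e ∈ S ↔ tgt e ∈ S) then (0:ℤ) else 1) := by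
      simp only [Finset.sum_insert he] at h
      set d : Finset V → ℤ := fun S => ∑ e ∈ F, (if (src e ∈ S ↔ tgt e ∈ S) then (0:ℤ) else 1)
        with hd
      have cross : ∀ S S' : Finset V, src e0 ∈ S → tgt e0 ∉ S → src e0 ∉ S' → tgt e0 ∈ S' →
          ∑ v ∈ S, b v - d S + (∑ v ∈ S', b v - d S') ≤ 0 := by
        intro S S' h1 h2 h3 h4
        have hi := h (S ∩ S')
        have hu := h (S ∪ S')
        simp [h1, h2, h3, h4] at hi hu
        have hm := Finset.sum_union_inter (s₁ := S) (s₂ := S') (f := b)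
        have hs : d (S ∩ S') + d (S ∪ S') ≤ d S + d S' := by
          simp only [hd, ← Finset.sum_add_distrib]
          apply Finset.sum_le_sum
          intro e _
          by_cases a1 : src e ∈ S <;> by_cases a2 : src e ∈ S' <;>
          by_cases a3 : tgt e ∈ S <;> by_cases a4 : tgt e ∈ S' <;> simp [a1, a2, a3, a4]
        simp only [hd, Finset.mem_inter, Finset.mem_union] at *
        linarith
      have h' : ∀ S : Finset V, ∑ v ∈ S, b v ≤ (if (src e0 ∈ S ↔ tgt e0 ∈ S) then (0:ℤ) else 1) + d S := h
      suffices hg : ∃ j : ℤ, |j| ≤ 1 ∧ ∀ S : Finset V,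
        ∑ v ∈ S, b v - j * ((if src e0 ∈ S then 1 else 0) - (if tgt e0 ∈ S then 1 else 0)) ≤ d S from hg
      clear_value d
      clear h
      by_cases c1 : ∃ S : Finset V, src e0 ∈ S ∧ tgt e0 ∉ S ∧ 1 ≤ ∑ v ∈ S, b v - d S
      · obtain ⟨S0, s1, s2, s3⟩ := c1
        refine ⟨1, by simp, fun S => ?_⟩
        have q1 := h' S
        have q2 := cross S0 S s1 s2
        by_cases a1 : src e0 ∈ S <;> by_cases a2 : tgt e0 ∈ S <;> simp [a1, a2] at q1 q2 ⊢ <;> linarith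
      · push Not at c1
        by_cases c2 : ∃ S : Finset V, src e0 ∈ S ∧ tgt e0 ∉ S ∧ 0 ≤ ∑ v ∈ S, b v - d S
        · obtain ⟨S0, s1, s2, s3⟩ := c2
          refine ⟨0, by simp, fun S => ?_⟩
          have q1 := h' S
          have q2 := cross S0 S s1 s2
          have q3 := c1 S
          by_cases a1 : src e0 ∈ S <;> by_cases a2 : tgt e0 ∈ S <;> simp [a1, a2] at q1 q2 q3 ⊢ <;> linarith
        · push Not at c2
          refine ⟨-1, by simp, fun S => ?_⟩
          have q1 := h' S
          have q3 := c2 S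
          by_cases a1 : src e0 ∈ S <;> by_cases a2 : tgt e0 ∈ S <;> simp [a1, a2] at q1 q3 ⊢ <;> linarith
    obtain ⟨j, hj, hjS⟩ := key
    obtain ⟨φ, p1, p2, p3⟩ := ih (fun v => b v - j * ((if src e0 = v then 1 else 0) - (if tgt e0 = v then 1 else 0)))
      (by simp [Finset.sum_sub_distrib, hb, ← Finset.mul_sum])
      (by
        intro S
        have := hjS S
        simpa [Finset.sum_sub_distrib, ← Finset.mul_sum] using this)
    refine ⟨Function.update φ e0 j, ?_, ?_, ?_⟩
    · intro e
      by_cases hh : e = e0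
      · subst hh; simpa using hj
      · simpa [hh] using p1 e
    · intro e hh
      simp only [Finset.mem_insert, not_or] at hh
      simpa [hh.1] using p2 e hh.2
    · intro v
      have := p3 v
      rw [← Finset.add_sum_erase _ _ (Finset.mem_univ e0)] at this ⊢
      rw [p2 e0 he] at this
      have e2 : ∑ x ∈ Finset.univ.erase e0, Function.update φ e0 j x * ((if src x = v then 1 else 0) - (if tgt x = v then 1 else 0))
        = ∑ x ∈ Finset.univ.erase e0, φ x * ((if src x = v then 1 else 0) - (if tgt x = v then 1 else 0)) := by
        apply Finset.sum_congr rfl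
        intro x hx
        rw [Function.update_of_ne (Finset.ne_of_mem_erase hx)]
      rw [e2, Function.update_self]
      linarith

open Classical in
lemma aux_dec {V E : Type*} [Fintype V] [Fintype E] (G : Multigraph V E) (src tgt : E → V)
    (hG : ∀ e, G.ends e = s(src e, tgt e)) (s t : V) (k : ℕ) (n : ℕ) :
    ∀ (φ : E → ℤ) (x : V), (∀ e, |φ e| ≤ 1) → (Finset.univ.filter fun e => φ e ≠ 0).card ≤ n →
      (∀ v, ∑ e, φ e * ((if src e = v then 1 else 0) - (if tgt e = v then 1 else 0)) =
        (if x = v then 1 else 0) + k * (if s = v then 1 else 0) - (k + 1) * (if t = v then 1 else 0)) →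
      ∃ (p : List (V × E)) (ψ : E → ℤ), G.IsTtrail x t p ∧ (∀ e ∈ p.map Prod.snd, φ e ≠ 0) ∧
        (∀ e, |ψ e| ≤ 1) ∧ (∀ e, ψ e ≠ 0 → φ e ≠ 0 ∧ e ∉ p.map Prod.snd) ∧
        ∀ v, ∑ e, ψ e * ((if src e = v then 1 else 0) - (if tgt e = v then 1 else 0)) =
          k * (if s = v then 1 else 0) - k * (if t = v then 1 else 0) := by
  induction n with
  | zero =>
    intro φ x h1 h2 h3
    have h0 : ∀ e, φ e = 0 := by simpa [Finset.filter_eq_empty_iff] using h2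
    have hx := h3 x
    simp [h0] at hx
    by_cases hxt : x = t
    · subst hxt
      refine ⟨[], φ, ⟨rfl, by simp⟩, by simp, h1, by simp [h0], ?_⟩
      intro v
      rw [h3 v]; ring
    · rw [if_neg (Ne.symm hxt)] at hx
      split_ifs at hx <;> linarith
  | succ n ih =>
    intro φ x h1 h2 h3
    by_cases hxt : x = t
    · subst hxt
      refine ⟨[], φ, ⟨rfl, by simp⟩, by simp, h1, by simp, ?_⟩
      intro v
      rw [h3 v]; ring
    · have hpos : 0 < ∑ e, φ e * ((if src e = x then 1 else 0) - (if tgt e = x then 1 else 0)) := by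
        rw [h3 x, if_neg (Ne.symm hxt), if_pos rfl]
        have hk : (0:ℤ) ≤ k := Int.natCast_nonneg k
        split_ifs <;> simp <;> linarith
      obtain ⟨e, -, he⟩ := Finset.exists_lt_of_sum_lt (s := Finset.univ) (f := fun _ : E => (0:ℤ)) (by simpa using hpos)
      have hne : φ e ≠ 0 := by
        rintro h; simp [h] at he
      have hw : ∃ w, G.ends e = s(x, w) ∧ ∀ v, φ e * ((if src e = v then 1 else 0) - (if tgt e = v then 1 else 0)) =
          (if x = v then (1:ℤ) else 0) - (if w = v then 1 else 0) := by
        have ha := abs_le.1 (h1 e)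
        by_cases a1 : src e = x
        · by_cases a2 : tgt e = x
          · simp [a1, a2] at he
          · simp [a1, a2] at he
            have : φ e = 1 := by omega
            exact ⟨tgt e, by rw [hG, a1], fun v => by rw [this, a1]; ring⟩
        · by_cases a2 : tgt e = x
          · simp [a1, a2] at he
            have : φ e = -1 := by omega
            exact ⟨src e, by rw [hG, a2, Sym2.eq_swap], fun v => by rw [this, a2]; ring⟩
          · simp [a1, a2] at he
      obtain ⟨w, hw1, hw2⟩ := hw
      obtain ⟨p, ψ, q1, q2, q3, q4, q5⟩ := ih (Function.update φ e 0) w (by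
          intro e'
          by_cases hh : e' = e
          · subst hh; simp
          · simpa [hh] using h1 e')
        (by
          have : (Finset.univ.filter fun e' => Function.update φ e 0 e' ≠ 0) =
            (Finset.univ.filter fun e' => φ e' ≠ 0).erase e := by
            ext e'
            by_cases hh : e' = e
            · subst hh; simp
            · simp [hh]
          rw [this, Finset.card_erase_of_mem (by simpa using hne)]
          omega)
        (by
          intro v
          have h4 := h3 v
          rw [← Finset.add_sum_erase _ _ (Finset.mem_univ e)] at h4 ⊢
          have e2 : ∑ x ∈ Finset.univ.erase e, Function.update φ e 0 x * ((if src x = v then 1 else 0) - (if tgt x = v then 1 else 0))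
            = ∑ x ∈ Finset.univ.erase e, φ x * ((if src x = v then 1 else 0) - (if tgt x = v then 1 else 0)) := by
            apply Finset.sum_congr rfl
            intro x hx
            rw [Function.update_of_ne (Finset.ne_of_mem_erase hx)]
          rw [e2, Function.update_self]
          rw [hw2 v] at h4
          linarith)
      have hne' : ∀ e', Function.update φ e 0 e' ≠ 0 → e' ≠ e ∧ φ e' ≠ 0 := by
        intro e' h
        by_cases hh : e' = e
        · subst hh; simp at h
        · exact ⟨hh, by simpa [hh] using h⟩
      refine ⟨(x, e) :: p, ψ, ⟨⟨rfl, w, hw1, q1.1⟩, ?_⟩, ?_, q3, ?_, q5⟩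
      · rw [List.map_cons, List.nodup_cons]
        exact ⟨fun hh => (hne' _ (q2 _ hh)).1 rfl, q1.2⟩
      · intro e' he'
        rw [List.map_cons, List.mem_cons] at he'
        rcases he' with rfl | he'
        · exact hne
        · exact (hne' _ (q2 _ he')).2
      · intro e' he'
        have := q4 e' he'
        refine ⟨(hne' _ this.1).2, ?_⟩
        rw [List.map_cons, List.mem_cons, not_or]
        exact ⟨(hne' _ this.1).1, this.2⟩

/-- Edge `e` leaves the set `S`. -/
def Crosses {V E : Type*} (G : Multigraph V E) (S : Finset V) (e : E) : Prop :=
  ∃ u w, u ∈ S ∧ w ∉ S ∧ G.ends e = s(u, w)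

open Classical in
lemma aux_menger {V E : Type*} [Fintype V] [Fintype E] (G : Multigraph V E) (s t : V)
    (hn : ¬ G.KConn 3 s t) :
    ∃ S : Finset V, s ∈ S ∧ t ∉ S ∧ (Finset.univ.filter fun e => G.Crosses S e).card ≤ 2 := by
  by_contra hcon
  push Not at hcon
  apply hn
  have hor : ∀ e, ∃ q : V × V, G.ends e = s(q.1, q.2) := fun e => by
    induction h : G.ends e with | _ a b => exact ⟨(a, b), rfl⟩
  choose q hG using hor
  have hst : s ≠ t := fun h => hn (Or.inl h)
  have hcard : ∀ S : Finset V, ∑ e, (if ((q e).1 ∈ S ↔ (q e).2 ∈ S) then (0:ℤ) else 1) =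
      ((Finset.univ.filter fun e => G.Crosses S e).card : ℤ) := by
    intro S
    rw [Finset.card_filter]
    push_cast
    apply Finset.sum_congr rfl
    intro e _
    have : G.Crosses S e ↔ ¬ ((q e).1 ∈ S ↔ (q e).2 ∈ S) := by
      unfold Crosses
      constructor
      · rintro ⟨u, w, h1, h2, h3⟩
        rw [hG, Sym2.eq_iff] at h3
        rcases h3 with ⟨h3, h4⟩ | ⟨h3, h4⟩ <;> rw [h3, h4] <;> tauto
      · intro h
        by_cases h1 : (q e).1 ∈ S
        · exact ⟨_, _, h1, by tauto, hG e⟩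
        · exact ⟨(q e).2, (q e).1, by tauto, h1, by rw [hG e, Sym2.eq_swap]⟩
    by_cases h : ((q e).1 ∈ S ↔ (q e).2 ∈ S)
    · rw [if_pos h, if_neg (by tauto)]
    · rw [if_neg h, if_pos (by tauto)]
  obtain ⟨φ, p1, -, p3⟩ := aux_flow (fun e => (q e).1) (fun e => (q e).2) Finset.univ
    (fun v => 3 * (if s = v then 1 else 0) - 3 * (if t = v then 1 else 0))
    (by simp [Finset.sum_sub_distrib])
    (by
      intro S
      rw [hcard]
      have := hcon S
      simp only [Finset.sum_sub_distrib, ← Finset.mul_sum, Finset.sum_ite_eq]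
      by_cases a1 : s ∈ S <;> by_cases a2 : t ∈ S <;> simp [a1, a2] at this ⊢
      omega)
  obtain ⟨P0, φ0, r1, r2, r3, r4, r5⟩ := aux_dec G _ _ hG s t 2 _ φ s p1 le_rfl
    (by intro v; rw [← p3 v]; push_cast; ring)
  obtain ⟨P1, φ1, s1, s2, s3, s4, s5⟩ := aux_dec G _ _ hG s t 1 _ φ0 s r3 le_rfl
    (by intro v; rw [r5 v]; push_cast; ring)
  obtain ⟨P2, φ2, t1, t2, t3, t4, t5⟩ := aux_dec G _ _ hG s t 0 _ φ1 s s3 le_rfl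
    (by intro v; rw [s5 v]; push_cast; ring)
  have d01 : EdgeDisjoint P0 P1 := fun e h0 h1 => (r4 e (s2 e h1)).2 h0
  have d12 : EdgeDisjoint P1 P2 := fun e h0 h1 => (s4 e (t2 e h1)).2 h0
  have d02 : EdgeDisjoint P0 P2 := fun e h0 h1 => (r4 e (s4 e (t2 e h1)).1).2 h0
  have sy : ∀ {P Q : List (V × E)}, EdgeDisjoint P Q → EdgeDisjoint Q P :=
    fun h e h1 h2 => h e h2 h1
  refine Or.inr ⟨![P0, P1, P2], ?_, ?_⟩
  · intro i
    fin_cases i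
    · exact r1
    · exact s1
    · exact t1
  · intro i j hij
    fin_cases i <;> fin_cases j
    · exact absurd rfl hij
    · exact d01
    · exact d02
    · exact sy d01
    · exact absurd rfl hij
    · exact d12
    · exact sy d02
    · exact sy d12
    · exact absurd rfl hij

lemma aux_chain_cross {V E : Type*} (G : Multigraph V E) (S : Finset V) (p : List (V × E)) :
    ∀ x y, G.IsChain x y p → x ∈ S → y ∉ S → ∃ e ∈ p.map Prod.snd, G.Crosses S e := by
  induction p with
  | nil => intro x y h hx hy; exact absurd (h ▸ hx) hy
  | cons a r ih =>
    obtain ⟨v, e⟩ := a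
    rintro x y ⟨rfl, w, hw, hr⟩ hx hy
    by_cases h : w ∈ S
    · obtain ⟨e', h1, h2⟩ := ih w y hr h hy
      exact ⟨e', by simp only [List.map_cons, List.mem_cons]; exact Or.inr h1, h2⟩
    · exact ⟨e, by simp, v, w, hx, h, hw⟩

open Classical in
lemma aux_three {α : Type*} [Fintype α] (P : α → Prop) (h : (Finset.univ.filter P).card ≤ 2)
    (x y z : α) (hx : P x) (hy : P y) (hz : P z) (h1 : x ≠ y) (h2 : x ≠ z) (h3 : y ≠ z) : False := by
  have : ({x, y, z} : Finset α) ⊆ Finset.univ.filter P := by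
    intro w hw
    simp only [Finset.mem_insert, Finset.mem_singleton] at hw
    rcases hw with rfl | rfl | rfl <;> simpa
  have h4 := Finset.card_le_card this
  rw [Finset.card_eq_three.2 ⟨x, y, z, h1, h2, h3, rfl⟩] at h4
  omega

open Classical in
/-- A vertex not 3-edge-connected to `v₀` is separated from the whole class by 2 edges. -/
lemma aux_cut {V E : Type*} [Fintype V] [Fintype E] (G : Multigraph V E) (c v₀ : V)
    (hn : ¬ G.KConn 3 c v₀) :
    ∃ S : Finset V, c ∈ S ∧ (∀ t, G.KConn 3 t v₀ → t ∉ S) ∧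
      (Finset.univ.filter fun e => G.Crosses S e).card ≤ 2 := by
  obtain ⟨S, h1, h2, h3⟩ := aux_menger G c v₀ hn
  refine ⟨S, h1, ?_, h3⟩
  rintro t (rfl | ⟨p, hp, hd⟩) ht
  · exact h2 ht
  · choose e he hc using fun i => aux_chain_cross G S (p i) t v₀ (hp i).1 ht h2
    have hne : ∀ i j, i ≠ j → e i ≠ e j := fun i j hij h => hd i j hij _ (he i) (h ▸ he j)
    exact aux_three _ h3 (e 0) (e 1) (e 2) (hc 0) (hc 1) (hc 2)
      (hne _ _ (by decide)) (hne _ _ (by decide)) (hne _ _ (by decide))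
end Multigraph
namespace Multigraph
/-- Adjacency outside of `T`. -/
def outG {V E : Type*} (G : Multigraph V E) (T : V → Prop) : SimpleGraph V where
  Adj u v := u ≠ v ∧ ¬ T u ∧ ¬ T v ∧ ∃ e, G.ends e = s(u, v)
  symm := ⟨by
    rintro u v ⟨h1, h2, h3, e, h4⟩
    exact ⟨h1.symm, h3, h2, e, by rw [h4, Sym2.eq_swap]⟩⟩
  loopless := ⟨fun u h => h.1 rfl⟩

/-- `e` joins `T` to the outside vertex `x`. -/
def Att {V E : Type*} (G : Multigraph V E) (T : V → Prop) (e : E) (x : V) : Prop :=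
  ¬ T x ∧ ∃ t, T t ∧ G.ends e = s(t, x)

lemma aux_walk_out {V E : Type*} (G : Multigraph V E) (T : V → Prop) {u v : V}
    (w : (G.outG T).Walk u v) (h : ¬ T u) : ∀ z ∈ w.support, ¬ T z := by
  induction w with
  | nil => intro z hz; simp at hz; exact hz ▸ h
  | cons a p ih =>
    intro z hz
    rw [SimpleGraph.Walk.support_cons, List.mem_cons] at hz
    rcases hz with rfl | hz
    · exact h
    · exact ih a.2.2.1 z hz

lemma aux_first_hit {V : Type*} (H : SimpleGraph V) (M : V → Prop) {x y : V}
    (w : H.Walk x y) (h : M y) : ∃ c, M c ∧ ∃ q : H.Walk x c, ∀ v ∈ q.support, M v → v = c := by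
  induction w with
  | nil => exact ⟨_, h, .nil, by simp⟩
  | @cons u v _ a p ih =>
    by_cases hu : M u
    · exact ⟨u, hu, .nil, by simp⟩
    · obtain ⟨c, hc, q, hq⟩ := ih h
      refine ⟨c, hc, .cons a q, ?_⟩
      intro z hz hM
      rw [SimpleGraph.Walk.support_cons, List.mem_cons] at hz
      rcases hz with rfl | hz
      · exact absurd hM hu
      · exact hq z hz hM

lemma aux_walk_cross {V E : Type*} (G : Multigraph V E) (T : V → Prop) (S : Finset V)
    (hS : ∀ t, T t → t ∉ S) {c x : V} (w : (G.outG T).Walk c x) (hc : c ∈ S) (e : E)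
    (he : G.Att T e x) : ∃ e', G.Crosses S e' ∧ (G.ends e' ∈ w.edges ∨ e' = e) := by
  by_cases hx : x ∈ S
  · obtain ⟨h1, t, h2, h3⟩ := he
    exact ⟨e, ⟨x, t, hx, hS t h2, by rw [h3, Sym2.eq_swap]⟩, Or.inr rfl⟩
  · obtain ⟨d, d1, d2, d3⟩ := w.exists_boundary_dart (S : Set V) (by simpa using hc) (by simpa using hx)
    obtain ⟨-, -, -, e', h4⟩ := d.adj
    refine ⟨e', ⟨d.fst, d.snd, by simpa using d2, by simpa using d3, h4⟩, Or.inl ?_⟩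
    rw [h4]
    exact List.mem_map.2 ⟨d, d1, rfl⟩

open Classical in
lemma aux_key {V E : Type*} [Fintype V] [Fintype E] (G : Multigraph V E) (T : V → Prop)
    (hcut : ∀ c, ¬ T c → ∃ S : Finset V, c ∈ S ∧ (∀ t, T t → t ∉ S) ∧
      (Finset.univ.filter fun e => G.Crosses S e).card ≤ 2)
    (e1 e2 e3 : E) (x1 x2 x3 : V) (a1 : G.Att T e1 x1) (a2 : G.Att T e2 x2) (a3 : G.Att T e3 x3)
    (r12 : (G.outG T).Reachable x1 x2) (r31 : (G.outG T).Reachable x3 x1)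
    (h12 : e1 ≠ e2) (h13 : e1 ≠ e3) (h23 : e2 ≠ e3) : False := by
  obtain ⟨P, hP⟩ := r12.exists_isPath
  obtain ⟨w⟩ := r31
  obtain ⟨c, hc, Q, hQ⟩ := aux_first_hit _ (fun v => v ∈ P.support) w P.start_mem_support
  have hcT : ¬ T c := aux_walk_out G T P a1.1 c hc
  obtain ⟨S, s1, s2, s3⟩ := hcut c hcT
  have noT : ∀ {u v : V} (W : (G.outG T).Walk u v) (e : E) (x : V), G.Att T e x →
      G.ends e ∉ W.edges := by
    rintro u v W e x ⟨-, t, ht, he⟩ hm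
    have := W.edges_subset_edgeSet hm
    rw [he, SimpleGraph.mem_edgeSet] at this
    exact this.2.1 ht
  obtain ⟨f1, c1, o1⟩ := aux_walk_cross G T S s2 (P.takeUntil c hc).reverse s1 e1 a1
  obtain ⟨f2, c2, o2⟩ := aux_walk_cross G T S s2 (P.dropUntil c hc) s1 e2 a2
  obtain ⟨f3, c3, o3⟩ := aux_walk_cross G T S s2 Q.reverse s1 e3 a3
  have d12 := hP.isTrail.disjoint_edges_takeUntil_dropUntil hc
  have dQ : ∀ z, z ∈ Q.edges → z ∈ P.edges → False := by
    intro z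
    induction z with | _ u v =>
    intro h1 h2
    have q1 := hQ u (Q.fst_mem_support_of_mem_edges h1) (P.fst_mem_support_of_mem_edges h2)
    have q2 := hQ v (Q.snd_mem_support_of_mem_edges h1) (P.snd_mem_support_of_mem_edges h2)
    have := Q.edges_subset_edgeSet h1
    rw [SimpleGraph.mem_edgeSet] at this
    exact this.1 (q1.trans q2.symm)
  rw [SimpleGraph.Walk.edges_reverse, List.mem_reverse] at o1 o3
  refine aux_three _ s3 f1 f2 f3 c1 c2 c3 ?_ ?_ ?_
  · rintro rfl
    rcases o1 with o1 | rfl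
    · rcases o2 with o2 | rfl
      · exact d12 o1 o2
      · exact noT _ _ _ a2 o1
    · rcases o2 with o2 | rfl
      · exact noT _ _ _ a1 o2
      · exact h12 rfl
  · rintro rfl
    rcases o1 with o1 | rfl
    · rcases o3 with o3 | rfl
      · exact dQ _ o3 (P.edges_takeUntil_subset_edges hc o1)
      · exact noT _ _ _ a3 o1
    · rcases o3 with o3 | rfl
      · exact noT _ _ _ a1 o3
      · exact h13 rfl
  · rintro rfl
    rcases o2 with o2 | rfl
    · rcases o3 with o3 | rfl
      · exact dQ _ o3 (P.edges_dropUntil_subset_edges hc o2)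
      · exact noT _ _ _ a3 o2
    · rcases o3 with o3 | rfl
      · exact noT _ _ _ a2 o3
      · exact h23 rfl

lemma aux_att_unique {V E : Type*} (G : Multigraph V E) (T : V → Prop) (e : E) (x y : V)
    (hx : G.Att T e x) (hy : G.Att T e y) : x = y := by
  obtain ⟨h1, t, h2, h3⟩ := hx
  obtain ⟨h4, t', h5, h6⟩ := hy
  rw [h3, Sym2.eq_iff] at h6
  rcases h6 with ⟨_, h⟩ | ⟨h, _⟩
  · exact h
  · exact absurd (h ▸ h2) h4

/-- choice of one edge for every component outside of `T` -/
lemma aux_rep {V E : Type*} [Fintype V] [Fintype E] (G : Multigraph V E) (T : V → Prop)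
    (hkey : ∀ (e1 e2 e3 : E) (x1 x2 x3 : V), G.Att T e1 x1 → G.Att T e2 x2 → G.Att T e3 x3 →
      (G.outG T).Reachable x1 x2 → (G.outG T).Reachable x3 x1 →
      e1 ≠ e2 → e1 ≠ e3 → e2 ≠ e3 → False) :
    ∃ R : Set E, (∀ e ∈ R, ∃ x, G.Att T e x) ∧
      ∀ e1 e2 x1 x2, G.Att T e1 x1 → G.Att T e2 x2 → (G.outG T).Reachable x1 x2 → e1 ≠ e2 →
        (e1 ∈ R ∧ e2 ∉ R) ∨ (e1 ∉ R ∧ e2 ∈ R) := by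
  have hch : ∀ K : (G.outG T).ConnectedComponent, ∃ o : Option E,
      (∀ e, o = some e → ∃ x, G.Att T e x ∧ (G.outG T).connectedComponentMk x = K) ∧
      ((∃ e x, G.Att T e x ∧ (G.outG T).connectedComponentMk x = K) → o ≠ none) := by
    intro K
    by_cases h : ∃ e x, G.Att T e x ∧ (G.outG T).connectedComponentMk x = K
    · obtain ⟨e, x, hx⟩ := h
      exact ⟨some e, by rintro e' ⟨⟩; exact ⟨x, hx⟩, by simp⟩
    · exact ⟨none, by simp, fun h' => absurd h' h⟩
  choose o ho1 ho2 using hch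
  have hR : ∀ e x, G.Att T e x → ((∃ K, o K = some e) ↔
      o ((G.outG T).connectedComponentMk x) = some e) := by
    intro e x hx
    constructor
    · rintro ⟨K, hK⟩
      obtain ⟨y, hy, rfl⟩ := ho1 K e hK
      rwa [aux_att_unique G T e x y hx hy]
    · intro h; exact ⟨_, h⟩
  refine ⟨{e | ∃ K, o K = some e}, ?_, ?_⟩
  · rintro e ⟨K, hK⟩
    obtain ⟨y, hy, _⟩ := ho1 K e hK
    exact ⟨y, hy⟩
  · intro e1 e2 x1 x2 a1 a2 r h12
    have hK : (G.outG T).connectedComponentMk x1 = (G.outG T).connectedComponentMk x2 :=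
      SimpleGraph.ConnectedComponent.sound r
    change ((∃ K, o K = some e1) ∧ ¬ (∃ K, o K = some e2)) ∨ (¬ (∃ K, o K = some e1) ∧ (∃ K, o K = some e2))
    rw [hR e1 x1 a1, hR e2 x2 a2, ← hK]
    cases h : o ((G.outG T).connectedComponentMk x1) with
    | none => exact absurd h (ho2 _ ⟨e1, x1, a1, rfl⟩)
    | some e3 =>
      obtain ⟨x3, a3, r3⟩ := ho1 _ e3 h
      have r31 := SimpleGraph.ConnectedComponent.exact r3
      by_cases q1 : e3 = e1
      · subst q1; left; simpa using h12
      · by_cases q2 : e3 = e2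
        · subst q2; right; simpa using q1
        · exact (hkey e1 e2 e3 x1 x2 x3 a1 a2 a3 r r31 h12 (Ne.symm q1) (Ne.symm q2)).elim

lemma aux_chain_append {V E : Type*} (G : Multigraph V E) (l₁ l₂ : List (V × E)) :
    ∀ x y, G.IsChain x y (l₁ ++ l₂) ↔ ∃ z, G.IsChain x z l₁ ∧ G.IsChain z y l₂ := by
  induction l₁ with
  | nil => intro x y; simp [IsChain]
  | cons a r ih =>
    obtain ⟨v, e⟩ := a
    intro x y
    simp only [List.cons_append, IsChain, ih]
    constructor
    · rintro ⟨h, w, h1, z, h2, h3⟩; exact ⟨z, ⟨h, w, h1, h2⟩, h3⟩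
    · rintro ⟨z, ⟨h, w, h1, h2⟩, h3⟩; exact ⟨h, w, h1, z, h2, h3⟩

lemma aux_sum {V E A : Type*} [AddCommGroup A] (G : Multigraph V E) (T : V → Prop) (a : A)
    (g : V → A) (f : E → A) (hg1 : ∀ v, T v → g v = a) (hg0 : ∀ v, ¬ T v → g v = 0)
    (hf1 : ∀ e u v, T u → T v → G.ends e = s(u, v) → f e = -a)
    (hf0 : ∀ e u v, ¬ T u → ¬ T v → G.ends e = s(u, v) → f e = 0)
    (hf : ∀ e1 e2 x1 x2, G.Att T e1 x1 → G.Att T e2 x2 → (G.outG T).Reachable x1 x2 → e1 ≠ e2 →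
        f e1 + f e2 = -a) (p : List (V × E)) :
    ∀ x y, G.IsTtrail x y p → T y →
      (T x → pathSum g f p = 0) ∧
      (∀ e0 x0, G.Att T e0 x0 → ¬ T x → (G.outG T).Reachable x0 x → e0 ∉ p.map Prod.snd →
        f e0 + a + pathSum g f p = 0) := by
  induction p with
  | nil =>
    rintro x y ⟨h, -⟩ hy
    cases (h : x = y)
    exact ⟨fun _ => by simp [pathSum], fun _ _ _ h => absurd hy h⟩
  | cons b r ih =>
    obtain ⟨v, e⟩ := b
    rintro x y ⟨⟨rfl, w, hw, hr⟩, hnd⟩ hy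
    rw [List.map_cons, List.nodup_cons] at hnd
    obtain ⟨ihA, ihB⟩ := ih w y ⟨hr, hnd.2⟩ hy
    constructor
    · intro hx
      rw [pathSum_cons]
      simp only [hg1 v hx]
      by_cases hT : T w
      · rw [ihA hT, hf1 e v w hx hT hw]; abel
      · have := ihB e w ⟨hT, v, hx, hw⟩ hT (SimpleGraph.Reachable.refl _) hnd.1
        rw [← this]; abel
    · intro e0 x0 h0 hx hreach hmem
      rw [List.map_cons, List.mem_cons, not_or] at hmem
      rw [pathSum_cons]
      simp only [hg0 v hx]
      by_cases hT : T w
      · rw [ihA hT]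
        have := hf e0 e x0 v h0 ⟨hx, w, hT, by rw [hw, Sym2.eq_swap]⟩ hreach hmem.1
        rw [zero_add, add_zero, add_right_comm, this]; abel
      · rw [hf0 e v w hx hT hw]
        have hrw : (G.outG T).Reachable x0 w := by
          by_cases hvw : v = w
          · exact hvw ▸ hreach
          · exact hreach.trans (SimpleGraph.Adj.reachable ⟨hvw, hx, hT, e, hw⟩)
        have := ihB e0 x0 h0 hT hrw hmem.2
        rw [zero_add, zero_add]; exact this

lemma aux_sum0 {V E A : Type*} [AddCommGroup A] (G : Multigraph V E) (T : V → Prop)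
    (g : V → A) (f : E → A) (hg0 : ∀ v, ¬ T v → g v = 0)
    (hf0 : ∀ e u v, ¬ T u → ¬ T v → G.ends e = s(u, v) → f e = 0) (p : List (V × E)) :
    ∀ x y, G.IsChain x y p → ¬ T y → (∀ b ∈ p, ¬ T b.1) → ¬ T x ∧ pathSum g f p = 0 := by
  induction p with
  | nil => intro x y h hy _; cases (h : x = y); exact ⟨hy, by simp [pathSum]⟩
  | cons b r ih =>
    obtain ⟨v, e⟩ := b
    rintro x y ⟨rfl, w, hw, hr⟩ hy hp
    obtain ⟨i1, i2⟩ := ih w y hr hy (fun b hb => hp b (List.mem_cons_of_mem _ hb))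
    have hv : ¬ T v := hp (v, e) (by simp)
    refine ⟨hv, ?_⟩
    rw [pathSum_cons, i2]
    simp [hg0 v hv, hf0 e v w hv i1 hw]

end Multigraph

namespace Multigraph

variable {V E : Type*} [Fintype V] [Fintype E] [DecidableEq V] [DecidableEq E]


open Classical in
theorem stmt14 (G : Multigraph V E) {A : Type*} [AddCommGroup A] (v₀ : V) (a : A) :
    G.Balanceable (fun w => if G.KConn 3 w v₀ then a else 0) := by
  set T : V → Prop := fun w => G.KConn 3 w v₀ with hT
  obtain ⟨R, hR1, hR2⟩ := aux_rep G T (aux_key G T (fun c hc => aux_cut G c v₀ hc))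
  set g : V → A := fun w => if T w then a else 0 with hg
  set f : E → A := fun e =>
    if (∃ u v, T u ∧ T v ∧ G.ends e = s(u, v)) ∨ e ∈ R then -a else 0 with hfdef
  have hg1 : ∀ v, T v → g v = a := fun v h => if_pos h
  have hg0 : ∀ v, ¬ T v → g v = 0 := fun v h => if_neg h
  have hf1 : ∀ e u v, T u → T v → G.ends e = s(u, v) → f e = -a :=
    fun e u v h1 h2 h3 => if_pos (Or.inl ⟨u, v, h1, h2, h3⟩)
  have hf0 : ∀ e u v, ¬ T u → ¬ T v → G.ends e = s(u, v) → f e = 0 := by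
    intro e u v h1 h2 h3
    apply if_neg
    rintro (⟨u', v', h4, h5, h6⟩ | h)
    · rw [h3, Sym2.eq_iff] at h6
      rcases h6 with ⟨rfl, rfl⟩ | ⟨rfl, rfl⟩ <;> exact h1 ‹_›
    · obtain ⟨x, h4, t, h5, h6⟩ := hR1 e h
      rw [h3, Sym2.eq_iff] at h6
      rcases h6 with ⟨rfl, rfl⟩ | ⟨rfl, rfl⟩
      · exact h1 h5
      · exact h2 h5
  have hfA : ∀ e x, G.Att T e x → f e = if e ∈ R then -a else 0 := by
    rintro e x ⟨h1, t, h2, h3⟩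
    have : ¬ (∃ u v, T u ∧ T v ∧ G.ends e = s(u, v)) := by
      rintro ⟨u', v', h4, h5, h6⟩
      rw [h3, Sym2.eq_iff] at h6
      rcases h6 with ⟨rfl, rfl⟩ | ⟨rfl, rfl⟩ <;> exact h1 ‹_›
    simp only [hfdef, this, false_or]
  have hf : ∀ e1 e2 x1 x2, G.Att T e1 x1 → G.Att T e2 x2 → (G.outG T).Reachable x1 x2 → e1 ≠ e2 →
      f e1 + f e2 = -a := by
    intro e1 e2 x1 x2 a1 a2 r h
    rw [hfA e1 x1 a1, hfA e2 x2 a2]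
    rcases hR2 e1 e2 x1 x2 a1 a2 r h with ⟨h1, h2⟩ | ⟨h1, h2⟩ <;> simp [h1, h2]
  refine ⟨f, ?_⟩
  intro x p hp
  by_cases hx : T x
  · exact (aux_sum G T a g f hg1 hg0 hf1 hf0 hf p x x hp hx).1 hx
  by_cases hall : ∀ b ∈ p, ¬ T b.1
  · exact (aux_sum0 G T g f hg0 hf0 p x x hp.1 hx hall).2
  push Not at hall
  obtain ⟨⟨v, e⟩, hb, hbT⟩ := hall
  obtain ⟨l₁, l₂, rfl⟩ := List.append_of_mem hb
  obtain ⟨hc, hnd⟩ := hp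
  rw [aux_chain_append] at hc
  obtain ⟨z, hc1, hc2⟩ := hc
  have hz : v = z := hc2.1
  subst hz
  have hperm : ((v, e) :: l₂ ++ l₁).Perm (l₁ ++ (v, e) :: l₂) := List.perm_append_comm
  have htr : G.IsTtrail v v ((v, e) :: l₂ ++ l₁) :=
    ⟨(aux_chain_append G _ _ _ _).2 ⟨x, hc2, hc1⟩, ((hperm.map Prod.snd).nodup_iff).2 hnd⟩
  have hs := (aux_sum G T a g f hg1 hg0 hf1 hf0 hf _ v v htr hbT).1 hbT
  rw [← hs]
  exact ((hperm.map _).sum_eq).symm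

end Multigraph
end
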